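/- arXiv:2506.02145 — 3 statements merged into one kernel-verified Lean document; each statement's English description precedes it below -/
import Mathlib

section
/- Let d ≥ 1 and let Φ : ℂ^{d×d} → ℂ^{d×d} be a linear map that is 2-positive and trace-preserving. Then tr(Φ) ≤ d·min Re σ(Φ) + (d² − d), where the minimum is over the real parts of all eigenvalues of Φ. -/
/-!
Put `L = Φ - 1`. Since `tr Φ = tr L + d²`, the claim is `Re tr L ≤ d · Re ℓ` for every eigenvalue
`ℓ` of `L`. Everything known about `L` is encoded in the sesquilinear form `B = choiForm L` on
matrices (the Choi matrix of `L`), determined by `B(xy*, zw*) = y* L(xz*) w`: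

* `Re B(R, R) ≥ 0` whenever `R` is traceless of rank at most two; this is 2-positivity of `Φ`,
  the identity contributing only `|tr R|² = 0`;
* `∑ⱼ B(x yⱼ*, z yⱼ*) = tr L(xz*) = 0` for every orthonormal basis `yⱼ`;
* `B(1, 1) = tr L`.

The heart is `IsCondTwoPos.re_choiForm_one_le`: if `W` is unitary, `u ⊥ v` are unit vectors and
`W v = u`, then `Re tr L ≤ d · Re tr (L(vu*) W)`. Take an orthonormal eigenbasis `yⱼ` of `W` with
eigenvalues `κⱼ`, and `Rⱼ = (v + κ̄ⱼ u) yⱼ*`, of trace `2 τⱼ` with `τⱼ = yⱼ* v`. Then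
`S = ∑ⱼ Re B(Rⱼ, Rⱼ) = 2 Re tr (L(vu*) W)` and `∑ⱼ τ̄ⱼ Rⱼ = vv* + uu* =: D`. Extend `u, v` to an
orthonormal basis, with projections `Pₖ`. Positivity on the traceless matrices `Rⱼ - 2 τⱼ Pₖ`
(one for each of the `d - 2` indices other than those of `u` and `v`) and on `Rⱼ - τⱼ D`, which
has rank at most two because its range lies in the span of `u` and `v`, bounds `S` from below.
Adding these bounds, the first kind once and the second kind twice, and using
`Re B(Pₖ, Pₖ) ≤ 0` and `Re B(Pₖ - Pₗ, Pₖ - Pₗ) ≥ 0`, yields `d S ≥ 2 Re B(1, 1)`.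

For an eigenvector `Y` of `L`: if `tr Y ≠ 0` then `ℓ = 0`, and `Re B(1, 1) ≤ 0` is enough. If
`tr Y = 0`, polar decomposition gives a unitary `W` with `W Y` positive semidefinite, and the fact
that a traceless matrix has zero diagonal in some orthonormal basis lets one write
`W Y = ∑ₖ pₖ pₖ*` with `pₖ* W* pₖ = 0`. So `Y = ∑ₖ (W* pₖ) pₖ*`, and the inequality above applied
to each pair `W* pₖ ⊥ pₖ` sums to `Re tr L · tr (W Y) ≤ d · Re ℓ · tr (W Y)`, with `tr (W Y) > 0`.
-/


open Matrix
open scoped ComplexOrder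

/-- A linear map on `d × d` complex matrices is *positive* if it sends positive semidefinite
matrices to positive semidefinite matrices. -/
def IsPosMap {d : ℕ} (Φ : Matrix (Fin d) (Fin d) ℂ → Matrix (Fin d) (Fin d) ℂ) : Prop :=
  ∀ A : Matrix (Fin d) (Fin d) ℂ, A.PosSemidef → (Φ A).PosSemidef

/-- A map on `d × d` complex matrices is *2-positive* if it sends every positive semidefinite
`2d × 2d` block matrix `[[A, B], [C, D]]` to a positive semidefinite block matrix
`[[Φ A, Φ B], [Φ C, Φ D]]`. -/
def IsTwoPos {d : ℕ} (Φ : Matrix (Fin d) (Fin d) ℂ → Matrix (Fin d) (Fin d) ℂ) : Prop :=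
  ∀ A B C D : Matrix (Fin d) (Fin d) ℂ,
    (Matrix.fromBlocks A B C D).PosSemidef →
    (Matrix.fromBlocks (Φ A) (Φ B) (Φ C) (Φ D)).PosSemidef

/-- A map on matrices is *trace-preserving* if `tr (Φ X) = tr X` for all `X`. -/
def IsTracePreserving {d : ℕ} (Φ : Matrix (Fin d) (Fin d) ℂ → Matrix (Fin d) (Fin d) ℂ) : Prop :=
  ∀ X : Matrix (Fin d) (Fin d) ℂ, (Φ X).trace = X.trace

section
variable {n : Type*} [Fintype n] [DecidableEq n]

/-! ### Phases and polar decomposition -/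

theorem exists_phase {z : ℂ} (hz : z ≠ 0) : ∃ ζ : ℂ, star ζ * ζ = 1 ∧ z * ζ = ‖z‖ := by
  have hn : (‖z‖ : ℂ) ≠ 0 := by simpa using hz
  have hcc : star z * z = ‖z‖ ^ 2 := by
    rw [Complex.star_def, mul_comm, Complex.mul_conj, Complex.normSq_eq_norm_sq]; simp
  refine ⟨star z / ‖z‖, ?_, ?_⟩
  · rw [star_div₀, star_star]
    simp only [Complex.star_def, Complex.conj_ofReal] at hcc ⊢
    field_simp
    linear_combination hcc
  · field_simp
    linear_combination hcc

theorem isCompact_unitaryGroup :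
    IsCompact {U : Matrix n n ℂ | U ∈ unitaryGroup n ℂ} := by
  have hK : IsCompact (Set.univ.pi fun _ : n => Set.univ.pi fun _ : n =>
      Metric.closedBall (0 : ℂ) 1) :=
    isCompact_univ_pi fun _ => isCompact_univ_pi fun _ => isCompact_closedBall _ _
  refine hK.of_isClosed_subset ?_ ?_
  · have : {U : Matrix n n ℂ | U ∈ unitaryGroup n ℂ} = {U | U * star U = 1} := by
      ext U; exact mem_unitaryGroup_iff
    rw [this]
    exact isClosed_eq (by fun_prop) continuous_const
  · intro U hU i _ j _
    simpa using entry_norm_bound_of_unitary hU i j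

/-- Multiplication by the phase `ζ` along the unit vector `x`, and the identity on the orthogonal
complement of `x`, is unitary. -/
theorem phaseReflection_mem {x : n → ℂ} (hx : star x ⬝ᵥ x = 1) {ζ : ℂ} (hζ : star ζ * ζ = 1) :
    (1 + (ζ - 1) • vecMulVec x (star x)) ∈ unitaryGroup n ℂ := by
  rw [mem_unitaryGroup_iff']
  have h1 : star (1 + (ζ - 1) • vecMulVec x (star x))
      = 1 + (star ζ - 1) • vecMulVec x (star x) := by
    rw [star_eq_conjTranspose]
    simp [conjTranspose_vecMulVec]
  rw [h1]
  have h2 : vecMulVec x (star x) * vecMulVec x (star x) = vecMulVec x (star x) := by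
    rw [vecMulVec_mul_vecMulVec, hx, one_smul]
  set p := vecMulVec x (star x)
  have h3 : (1 + (star ζ - 1) • p) * (1 + (ζ - 1) • p)
      = 1 + ((star ζ - 1) + (ζ - 1) + (star ζ - 1) * (ζ - 1)) • p := by
    simp only [mul_add, add_mul, mul_one, one_mul, smul_mul_assoc, mul_smul_comm, h2, smul_add]
    module
  rw [h3, show (star ζ - 1) + (ζ - 1) + (star ζ - 1) * (ζ - 1) = 0 by linear_combination hζ]
  simp

/-- Polar decomposition. A unitary `W` maximising `Re tr (W Y)` works: multiplying `W` by a phase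
along a single unit vector `x` cannot increase the real trace, so `x* W Y x` is real and
nonnegative. -/
theorem exists_unitary_mul_posSemidef (Y : Matrix n n ℂ) :
    ∃ W ∈ unitaryGroup n ℂ, (W * Y).PosSemidef := by
  obtain ⟨W, hW, hmax⟩ := (isCompact_unitaryGroup (n := n)).exists_isMaxOn
    ⟨1, one_mem (unitaryGroup n ℂ)⟩ (f := fun W => (W * Y).trace.re)
    (by fun_prop)
  refine ⟨W, hW, ?_⟩
  have key : ∀ x : n → ℂ, star x ⬝ᵥ x = 1 → 0 ≤ star x ⬝ᵥ (W * Y) *ᵥ x := by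
    intro x hx
    set c := star x ⬝ᵥ (W * Y) *ᵥ x with hc
    by_cases h0 : c = 0
    · rw [h0]
    obtain ⟨ζ, hζ, hcζ⟩ := exists_phase h0
    have hm := hmax (mul_mem (phaseReflection_mem hx hζ) hW)
    simp only [Set.mem_ofPred_eq] at hm
    have : ((1 + (ζ - 1) • vecMulVec x (star x)) * W * Y).trace
        = (W * Y).trace + (ζ - 1) * c := by
      rw [mul_assoc, add_mul, one_mul, trace_add, smul_mul_assoc, trace_smul, vecMulVec_mul,
        trace_vecMulVec, dotProduct_comm, ← dotProduct_mulVec, smul_eq_mul]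
    rw [this, show (ζ - 1) * c = ‖c‖ - c by linear_combination hcζ] at hm
    simp at hm
    have h3 := Complex.re_le_norm c
    have h4 : c.re = ‖c‖ := le_antisymm h3 hm
    exact Complex.re_eq_norm.mp h4
  have key2 : ∀ x : n → ℂ, 0 ≤ star x ⬝ᵥ (W * Y) *ᵥ x := by
    intro x
    by_cases hx : x = 0
    · simp [hx]
    have hpos : 0 < star x ⬝ᵥ x := by
      exact dotProduct_star_self_pos_iff.mpr hx
    obtain ⟨r, hr, hrx⟩ : ∃ r : ℝ, 0 < r ∧ star x ⬝ᵥ x = r := by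
      refine ⟨(star x ⬝ᵥ x).re, (Complex.pos_iff.mp hpos).1, ?_⟩
      exact Complex.eq_re_of_ofReal_le (r := 0) hpos.le
    have hs : ((√r : ℝ) : ℂ) * (√r : ℝ) = r := by
      rw [← Complex.ofReal_mul, Real.mul_self_sqrt hr.le]
    have hr0 : ((√r : ℝ) : ℂ) ≠ 0 := by
      simpa using (Real.sqrt_pos.mpr hr).ne'
    have := key (((√r : ℝ) : ℂ)⁻¹ • x) (by
      simp [star_smul, hrx]
      field_simp
      rw [← hs]; ring)
    rw [star_smul, mulVec_smul, smul_dotProduct, dotProduct_smul] at this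
    have h3 : star x ⬝ᵥ (W * Y) *ᵥ x = ((r : ℝ) : ℂ) * ((star ((√r : ℝ) : ℂ)⁻¹) •
        ((√r : ℝ) : ℂ)⁻¹ • (star x ⬝ᵥ (W * Y) *ᵥ x)) := by
      simp only [smul_eq_mul, star_inv₀, Complex.star_def, Complex.conj_ofReal]
      field_simp
      rw [← hs]; ring
    rw [h3]
    exact mul_nonneg (by exact_mod_cast hr.le) this
  rw [posSemidef_iff_dotProduct_mulVec]
  refine ⟨?_, key2⟩
  rw [← isSymmetric_toEuclideanLin_iff, LinearMap.isSymmetric_iff_inner_map_self_real]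
  intro x
  have h := key2 x.ofLp
  rw [EuclideanSpace.inner_eq_star_dotProduct, ofLp_toLpLin, toLin'_apply]
  have h2 := Complex.eq_re_of_ofReal_le (r := 0) (by simpa using h)
  rw [dotProduct_star, dotProduct_comm, h2]
  simp

/-! ### Diagonalisation of unitary matrices -/

/-- A unitary matrix has an orthonormal eigenbasis. By the Cayley transform this reduces to the
spectral theorem for Hermitian matrices: for a unimodular `μ` outside the spectrum of `W`, the
matrix `i (μ + W) (μ - W)⁻¹` is Hermitian, and its eigenvectors are eigenvectors of `W`. -/
theorem exists_unitary_eigenbasis {W : Matrix n n ℂ} (hW : W ∈ unitaryGroup n ℂ) :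
    ∃ U ∈ unitaryGroup n ℂ, ∃ κ : n → ℂ, ∀ j, W *ᵥ U.col j = κ j • U.col j := by
  obtain ⟨μ, hμ, hμW⟩ : ∃ μ : ℂ, star μ * μ = 1 ∧ μ ∉ spectrum ℂ W := by
    have hinf : (Metric.sphere (0 : ℂ) 1).Infinite := by
      refine Set.infinite_of_injOn_mapsTo (s := Set.Icc (0 : ℝ) 1)
        (f := fun r => (⟨r, √(1 - r ^ 2)⟩ : ℂ)) ?_ ?_ (Set.Icc_infinite one_pos)
      · intro a _ b _ h
        exact congrArg Complex.re h
      · intro a ha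
        have h1 : 0 ≤ 1 - a ^ 2 := by nlinarith [ha.1, ha.2]
        rw [mem_sphere_zero_iff_norm, Complex.norm_eq_sqrt_sq_add_sq]
        simp [Real.sq_sqrt h1]
    obtain ⟨μ, h1, h2⟩ := (hinf.sdiff (Matrix.finite_spectrum W)).nonempty
    refine ⟨μ, ?_, h2⟩
    have : ‖μ‖ = 1 := by simpa using h1
    rw [Complex.star_def, mul_comm, Complex.mul_conj, Complex.normSq_eq_norm_sq, this]; simp
  rw [spectrum.notMem_iff, isUnit_iff_isUnit_det, Algebra.algebraMap_eq_smul_one] at hμW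
  have hWW : star W * W = 1 := mem_unitaryGroup_iff'.mp hW
  have hWW' : W * star W = 1 := mem_unitaryGroup_iff.mp hW
  set N : Matrix n n ℂ := μ • (1 : Matrix n n ℂ) - W with hN
  set T : Matrix n n ℂ := μ • (1 : Matrix n n ℂ) + W with hT
  have hcomm : T * N = N * T := by
    simp only [hN, hT, add_mul, mul_sub, sub_mul, mul_add, smul_mul_assoc, mul_smul_comm,
      mul_one, one_mul, smul_add, smul_sub]
    abel
  have h1 : N⁻¹ * T = T * N⁻¹ := by
    calc N⁻¹ * T = N⁻¹ * (T * N) * N⁻¹ := by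
          rw [mul_assoc, mul_assoc, mul_nonsing_inv _ hμW, mul_one]
      _ = T * N⁻¹ := by rw [hcomm, ← mul_assoc, nonsing_inv_mul _ hμW, one_mul]
  have hμ' : μ ≠ 0 := by rintro rfl; simp at hμ
  have hTs : Tᴴ = (star μ) • star W * T := by
    simp only [hT, conjTranspose_add, conjTranspose_smul, conjTranspose_one,
      mul_add, smul_mul_assoc, hWW, mul_smul_comm, mul_one, smul_smul]
    rw [mul_comm μ, hμ, one_smul, star_eq_conjTranspose, add_comm]
  have hNs : Nᴴ = -((star μ) • star W * N) := by
    simp only [hN, conjTranspose_sub, conjTranspose_smul, conjTranspose_one,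
      mul_sub, smul_mul_assoc, hWW, mul_smul_comm, mul_one, smul_smul]
    rw [mul_comm μ, hμ, one_smul, star_eq_conjTranspose, neg_sub]
  -- As `W` is unitary, `T* = μ̄ W* T` and `N* = -μ̄ W* N`, so `T N⁻¹` is anti-Hermitian.
  have hH : (Complex.I • (T * N⁻¹)).IsHermitian := by
    have hNdet : IsUnit (Nᴴ).det := by rw [det_conjTranspose]; exact hμW.star
    have hA : Tᴴ * N = -(Nᴴ * T) := by
      rw [hTs, hNs, neg_mul, neg_neg, mul_assoc, mul_assoc, hcomm]
    have hB : (N⁻¹)ᴴ * Tᴴ = -(T * N⁻¹) := by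
      rw [conjTranspose_nonsing_inv]
      calc (Nᴴ)⁻¹ * Tᴴ = (Nᴴ)⁻¹ * (Tᴴ * N) * N⁻¹ := by
            rw [mul_assoc, mul_assoc, mul_nonsing_inv _ hμW, mul_one]
        _ = _ := by
          rw [hA, mul_neg, neg_mul, ← mul_assoc, nonsing_inv_mul _ hNdet, one_mul]
    rw [IsHermitian, conjTranspose_smul, conjTranspose_mul, hB]
    simp
  refine ⟨hH.eigenvectorUnitary, hH.eigenvectorUnitary.2,
    fun j => ((hH.eigenvalues j : ℂ) - Complex.I) / (hH.eigenvalues j + Complex.I) * μ, ?_⟩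
  intro j
  rw [hH.eigenvectorUnitary_col_eq j]
  set y := (hH.eigenvectorBasis j).ofLp with hy
  set e : ℝ := hH.eigenvalues j with he
  have h2 : (Complex.I • (T * N⁻¹)) *ᵥ y = (e : ℂ) • y := hH.mulVec_eigenvectorBasis j
  have h3 : Complex.I • (T *ᵥ y) = (e : ℂ) • N *ᵥ y := by
    rw [← mulVec_smul N, ← h2, mulVec_mulVec, mul_smul_comm, ← mul_assoc, ← hcomm, mul_assoc,
      mul_nonsing_inv _ hμW, mul_one, smul_mulVec]
  simp only [hT, hN, add_mulVec, sub_mulVec, smul_mulVec, one_mulVec] at h3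
  have hne : (e : ℂ) + Complex.I ≠ 0 := by
    intro h
    simpa using congrArg Complex.im h
  have h4 : ((e : ℂ) + Complex.I) • (W *ᵥ y) = (((e : ℂ) - Complex.I) * μ) • y := by
    ext i
    have := congrFun h3 i
    simp only [Pi.smul_apply, Pi.add_apply, Pi.sub_apply, smul_eq_mul] at this ⊢
    linear_combination this
  beta_reduce
  rw [div_mul_eq_mul_div, ← he, div_eq_inv_mul, mul_smul, ← h4, smul_smul, inv_mul_cancel₀ hne, one_smul]

/-! ### Traceless matrices have zero diagonal in some orthonormal basis -/

/-- The quadratic form of a `2 × 2` matrix `[[a, b], [c, e]]` takes the value `(a + e) / 2` at some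
unit vector `(cos 2t, ω sin 2t)`: the phase `ω` makes the mixed terms a real multiple of `a - e`,
and the angle then solves a real trigonometric equation. -/
theorem exists_angle_phase (a b c e : ℂ) (hae : a ≠ e) :
    ∃ t : ℝ, ∃ ω : ℂ, star ω * ω = 1 ∧
      a * Real.cos (2 * t) ^ 2 + e * Real.sin (2 * t) ^ 2
        + Real.cos (2 * t) * Real.sin (2 * t) * (b * ω + c * star ω) = (a + e) / 2 := by
  have hae' : a - e ≠ 0 := sub_ne_zero.mpr hae
  obtain ⟨ω, hω, r, hr⟩ : ∃ ω : ℂ, star ω * ω = 1 ∧ ∃ r : ℝ, b * ω + c * star ω = (a - e) * r := by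
    set b' := b / (a - e) with hb
    set c' := c / (a - e) with hc
    have hex : ∃ ω : ℂ, star ω * ω = 1 ∧ (b' * ω + c' * star ω).im = 0 := by
      by_cases h0 : b' - star c' = 0
      · refine ⟨1, by simp, ?_⟩
        have : b' = star c' := sub_eq_zero.mp h0
        rw [this]; simp
      · obtain ⟨ω, hω, h1⟩ := exists_phase h0
        refine ⟨ω, hω, ?_⟩
        have h2 := congrArg Complex.im h1
        simp only [Complex.mul_im, Complex.sub_im, Complex.sub_re, Complex.star_def,
          Complex.conj_re, Complex.conj_im, Complex.ofReal_im, Complex.add_im] at h2 ⊢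
        linarith
    obtain ⟨ω, h1, h2⟩ := hex
    refine ⟨ω, h1, (b' * ω + c' * star ω).re, ?_⟩
    have h3 : ((b' * ω + c' * star ω).re : ℂ) = b' * ω + c' * star ω :=
      Complex.ext (by simp) (by simpa using h2.symm)
    rw [h3, hb, hc]; field_simp
  obtain ⟨s, hs⟩ : ∃ s : ℝ, Real.cos (2 * s) + r * Real.sin (2 * s) = 0 := by
    refine ⟨(Real.pi / 2 + Real.arctan r) / 2, ?_⟩
    rw [show 2 * ((Real.pi / 2 + Real.arctan r) / 2) = Real.arctan r + Real.pi / 2 by ring,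
      Real.cos_add_pi_div_two, Real.sin_add_pi_div_two]
    have h := Real.tan_arctan r
    rw [Real.tan_eq_sin_div_cos, div_eq_iff (Real.cos_arctan_pos r).ne'] at h
    linarith
  refine ⟨s / 2, ω, hω, ?_⟩
  rw [hr, show 2 * (s / 2) = s by ring]
  have h1 : ((Real.cos s : ℝ) : ℂ) ^ 2 + (Real.sin s : ℝ) ^ 2 = 1 := by
    exact_mod_cast Real.cos_sq_add_sin_sq s
  rw [Real.cos_two_mul, Real.sin_two_mul] at hs
  have h2 : 2 * ((Real.cos s : ℝ) : ℂ) ^ 2 - 1 + r * (2 * (Real.sin s : ℝ) * (Real.cos s : ℝ)) = 0 := by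
    exact_mod_cast hs
  -- With `r` the real ratio above, `h2` says `cos 2s + r sin 2s = 0`.
  linear_combination e * h1 + (a - e) / 2 * h2

/-- Conjugation by a Householder reflection in the `i, j` coordinate plane can replace the diagonal
entry at `i` by the mean of those at `i` and `j`, leaving the diagonal entries
outside `i, j` unchanged. -/
theorem exists_reflection_mean (Z : Matrix n n ℂ) {i j : n} (hij : i ≠ j) (hne : Z i i ≠ Z j j) :
    ∃ G ∈ unitaryGroup n ℂ, (Gᴴ * Z * G) i i = (Z i i + Z j j) / 2 ∧
      ∀ k, k ≠ i → k ≠ j → (Gᴴ * Z * G) k k = Z k k := by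
  obtain ⟨t, ω, hω, h⟩ := exists_angle_phase (Z i i) (Z i j) (Z j i) (Z j j) hne
  -- The reflection `1 - 2 w w*` sends `eᵢ` to `cos 2t eᵢ + ω sin 2t eⱼ`.
  set w : n → ℂ := Pi.single i (Real.sin t : ℂ) - Pi.single j (ω * Real.cos t) with hw
  have hcs : ((Real.cos t : ℝ) : ℂ) ^ 2 + (Real.sin t : ℝ) ^ 2 = 1 := by
    exact_mod_cast Real.cos_sq_add_sin_sq t
  have hwi : w i = Real.sin t := by simp [hw, hij]
  have hwj : w j = -(ω * Real.cos t) := by simp [hw, hij]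
  have hwk : ∀ k, k ≠ i → k ≠ j → w k = 0 := by intro k h1 h2; simp [hw, h1, h2]
  have hw1 : star w ⬝ᵥ w = 1 := by
    conv_lhs => arg 2; rw [hw]
    rw [dotProduct_sub, dotProduct_single, dotProduct_single]
    simp only [Pi.star_apply, hwi, hwj, Complex.star_def, Complex.conj_ofReal, map_neg, map_mul] at hω ⊢
    linear_combination (Real.cos t : ℂ) ^ 2 * hω + hcs
  have hG := phaseReflection_mem hw1 (ζ := -1) (by simp)
  set G := (1 + ((-1 : ℂ) - 1) • vecMulVec w (star w)) with hGdef
  have hcol : ∀ k l, G k l = (if k = l then 1 else 0) - 2 * w k * star (w l) := by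
    intro k l
    simp [hGdef, vecMulVec_apply, one_apply]; ring
  have hcoli : ∀ k, G k i = (Pi.single i (Real.cos (2 * t) : ℂ) : n → ℂ) k +
      (Pi.single j (ω * Real.sin (2 * t) : ℂ) : n → ℂ) k := by
    intro k
    rw [hcol, hwi, Real.cos_two_mul, Real.sin_two_mul, Complex.star_def, Complex.conj_ofReal]
    by_cases hki : k = i
    · subst hki
      simp [hij, hwi]
      simp only [Complex.ofReal_cos, Complex.ofReal_sin] at hcs
      linear_combination (-2) * hcs
    · by_cases hkj : k = j
      · subst hkj
        simp [hki, hwj]; ring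
      · simp [hki, hkj, hwk k hki hkj]
  refine ⟨G, hG, ?_, ?_⟩
  · have hc : G.col i = Pi.single i (Real.cos (2 * t) : ℂ) + Pi.single j (ω * Real.sin (2 * t) : ℂ) := by
      ext k; exact hcoli k
    have : (Gᴴ * Z * G) i i = star (G.col i) ⬝ᵥ Z *ᵥ (G.col i) := by
      rw [mul_assoc]; rfl
    rw [this, hc, ← h]
    simp only [mulVec_add, star_add, Pi.star_single, add_dotProduct, dotProduct_add,
      single_dotProduct, mulVec_single, Pi.smul_apply]
    simp [-Complex.ofReal_cos, -Complex.ofReal_sin]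
    simp only [Complex.star_def] at hω
    linear_combination (Z j j) * (Real.sin (2 * t) : ℂ) ^ 2 * hω
  · intro k h1 h2
    have hc : G.col k = Pi.single k 1 := by
      ext l
      simp [hcol, hwk k h1 h2, Pi.single_apply]
    have : (Gᴴ * Z * G) k k = star (G.col k) ⬝ᵥ Z *ᵥ (G.col k) := by
      rw [mul_assoc]; rfl
    rw [this, hc]
    simp [Pi.star_single, mulVec_single]

theorem trace_unitary_conj {U : Matrix n n ℂ} (hU : U ∈ unitaryGroup n ℂ) (Z : Matrix n n ℂ) :
    (Uᴴ * Z * U).trace = Z.trace := by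
  rw [trace_mul_comm, ← mul_assoc, ← star_eq_conjTranspose, mem_unitaryGroup_iff.mp hU, one_mul]

/-- A traceless matrix has zero diagonal in a suitable orthonormal basis. A minimiser of the sum of
the squared moduli of the diagonal entries has constant diagonal, since averaging two different
entries would lower that sum. -/
theorem exists_unitary_diag_eq_zero {Z : Matrix n n ℂ} (hZ : Z.trace = 0) :
    ∃ U ∈ unitaryGroup n ℂ, ∀ k, (Uᴴ * Z * U) k k = 0 := by
  obtain ⟨U, hU, hmin⟩ := (isCompact_unitaryGroup (n := n)).exists_isMinOn
    ⟨1, one_mem (unitaryGroup n ℂ)⟩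
    (f := fun U => ∑ k, Complex.normSq ((Uᴴ * Z * U) k k)) (by
      apply Continuous.continuousOn
      refine continuous_finsetSum _ fun k _ => Complex.continuous_normSq.comp ?_
      have : Continuous fun U : Matrix n n ℂ => Uᴴ * Z * U := by fun_prop
      exact (continuous_apply k).comp ((continuous_apply k).comp this))
  refine ⟨U, hU, ?_⟩
  set D := Uᴴ * Z * U with hD
  have hDtr : D.trace = 0 := by rw [hD, trace_unitary_conj hU, hZ]
  have hall : ∀ i j, D i i = D j j := by
    by_contra! hcon
    obtain ⟨i, j, hne⟩ := hcon
    have hij : i ≠ j := by rintro rfl; exact hne rfl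
    obtain ⟨G, hG, h1, h2⟩ := exists_reflection_mean D hij hne
    have hsplit : ∀ {R : Type} [AddCommMonoid R] (f : n → R),
        ∑ k, f k = f i + (f j + ∑ k ∈ (Finset.univ.erase i).erase j, f k) := by
      intro R _ f
      rw [← Finset.add_sum_erase _ f (Finset.mem_univ i),
        ← Finset.add_sum_erase (Finset.univ.erase i) f (a := j) (by simp [hij.symm])]
    have h3 : (Gᴴ * D * G) j j = (D i i + D j j) / 2 := by
      have ht := trace_unitary_conj hG D
      simp only [trace, diag_apply] at ht
      rw [hsplit, hsplit (fun k => D k k), h1,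
        Finset.sum_congr rfl fun k hk => h2 k (by simp at hk; tauto) (by simp at hk; tauto)] at ht
      linear_combination ht
    have hm := hmin (mul_mem hU hG)
    simp only [Set.mem_ofPred_eq] at hm
    have h4 : (U * G)ᴴ * Z * (U * G) = Gᴴ * D * G := by
      rw [hD, conjTranspose_mul]; simp only [mul_assoc]
    have h6 : ∑ k ∈ (Finset.univ.erase i).erase j, Complex.normSq ((Gᴴ * D * G) k k)
        = ∑ k ∈ (Finset.univ.erase i).erase j, Complex.normSq (D k k) :=
      Finset.sum_congr rfl fun k hk => by
        rw [h2 k (by simp at hk; tauto) (by simp at hk; tauto)]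
    rw [h4, ← hD, hsplit, hsplit (fun k => Complex.normSq ((Gᴴ * D * G) k k)), h1, h3, h6] at hm
    have h5 : 0 < Complex.normSq (D i i - D j j) := Complex.normSq_pos.mpr (sub_ne_zero.mpr hne)
    simp only [Complex.normSq_apply, Complex.sub_re, Complex.sub_im, Complex.div_ofNat_re,
      Complex.div_ofNat_im, Complex.add_re, Complex.add_im] at hm h5
    nlinarith
  intro k
  have : D.trace = Fintype.card n * D k k := by
    simp [trace, Finset.sum_congr rfl fun i _ => hall i k]
  rw [hDtr] at this
  have hn : Nonempty n := ⟨k⟩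
  simpa using this.symm

/-! ### The Choi form -/

/-- The sesquilinear form attached to a linear map `L` on matrices by its Choi matrix, linear in the
first and conjugate-linear in the second argument. It is pinned down by
`choiForm L (xy*) (zw*) = y* L(xz*) w`, see `choiForm_vecMulVec`. -/
def choiForm (L : Module.End ℂ (Matrix n n ℂ)) : Matrix n n ℂ →ₗ[ℂ] Matrix n n ℂ →ₗ⋆[ℂ] ℂ :=
  LinearMap.mk₂'ₛₗ (RingHom.id ℂ) (starRingEnd ℂ)
    (fun R S => ∑ i, ∑ k, R i ⬝ᵥ (L (single i k 1) *ᵥ star (S k)))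
    (by
      intro R R' S
      simp only [← Finset.sum_add_distrib, ← add_dotProduct]; rfl)
    (by
      intro c R S
      simp only [Finset.mul_sum, smul_eq_mul]
      refine Finset.sum_congr rfl fun i _ => Finset.sum_congr rfl fun k _ => ?_
      rw [show (c • R) i = c • R i from rfl, smul_dotProduct]; rfl)
    (by
      intro R S S'
      simp only [← Finset.sum_add_distrib, ← dotProduct_add, ← mulVec_add, ← star_add]; rfl)
    (by
      intro c R S
      simp only [Finset.mul_sum, smul_eq_mul]
      refine Finset.sum_congr rfl fun i _ => Finset.sum_congr rfl fun k _ => ?_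
      rw [show (c • S) k = c • S k from rfl, star_smul, mulVec_smul, dotProduct_smul]; rfl)

theorem choiForm_apply (L : Module.End ℂ (Matrix n n ℂ)) (R S : Matrix n n ℂ) :
    choiForm L R S = ∑ i, ∑ k, R i ⬝ᵥ (L (single i k 1) *ᵥ star (S k)) := rfl

theorem choiForm_vecMulVec (L : Module.End ℂ (Matrix n n ℂ)) (x y x' y' : n → ℂ) :
    choiForm L (vecMulVec x (star y)) (vecMulVec x' (star y'))
      = star y ⬝ᵥ L (vecMulVec x (star x')) *ᵥ y' := by
  have h : vecMulVec x (star x') = ∑ i, ∑ k, (x i * star (x' k)) • single i k (1 : ℂ) := by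
    conv_lhs => rw [matrix_eq_sum_single (vecMulVec x (star x'))]
    simp [vecMulVec_apply, smul_single]
  rw [h, choiForm_apply]
  simp only [map_sum, map_smul, sum_mulVec, dotProduct_sum, smul_mulVec, dotProduct_smul]
  refine Finset.sum_congr rfl fun i _ => Finset.sum_congr rfl fun k _ => ?_
  rw [show vecMulVec x (star y) i = x i • star y from rfl,
    show vecMulVec x' (star y') k = x' k • star y' from rfl, star_smul, star_star, mulVec_smul,
    smul_dotProduct, dotProduct_smul, smul_smul]

theorem choiForm_one_one (L : Module.End ℂ (Matrix n n ℂ)) :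
    choiForm L 1 1 = LinearMap.trace ℂ _ L := by
  rw [LinearMap.trace_eq_matrix_trace ℂ (Matrix.stdBasis ℂ n n), Matrix.trace, choiForm_apply,
    Fintype.sum_prod_type]
  refine Finset.sum_congr rfl fun i _ => Finset.sum_congr rfl fun k _ => ?_
  have h1 : ∀ i : n, (1 : Matrix n n ℂ) i = Pi.single i 1 := by
    intro i; ext k; simp [one_apply, Pi.single_apply, eq_comm]
  rw [h1, h1, diag_apply, LinearMap.toMatrix_apply, stdBasis_eq_single, Pi.star_single]
  simp [Matrix.stdBasis]

/-- The properties of `L = Φ - 1`, for `Φ` 2-positive and trace-preserving, that the argument uses: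
the Choi form is nonnegative on traceless matrices of rank at most two, `L` has traceless values,
and `L` commutes with the conjugate transpose on matrices of rank one. -/
structure IsCondTwoPos (L : Module.End ℂ (Matrix n n ℂ)) : Prop where
  pos : ∀ x₁ y₁ x₂ y₂ : n → ℂ, star y₁ ⬝ᵥ x₁ + star y₂ ⬝ᵥ x₂ = 0 →
    0 ≤ (choiForm L (vecMulVec x₁ (star y₁) + vecMulVec x₂ (star y₂))
      (vecMulVec x₁ (star y₁) + vecMulVec x₂ (star y₂))).re
  trace_eq_zero : ∀ X, (L X).trace = 0
  herm : ∀ x y : n → ℂ, L (vecMulVec x (star y)) = (L (vecMulVec y (star x)))ᴴ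

theorem isCondTwoPos_sub_one {Φ : Module.End ℂ (Matrix n n ℂ)}
    (h2 : ∀ A B C D : Matrix n n ℂ, (fromBlocks A B C D).PosSemidef →
      (fromBlocks (Φ A) (Φ B) (Φ C) (Φ D)).PosSemidef)
    (hTP : ∀ X, (Φ X).trace = X.trace) : IsCondTwoPos (Φ - 1) := by
  have hblock : ∀ x₁ x₂ : n → ℂ, (fromBlocks (Φ (vecMulVec x₁ (star x₁)))
      (Φ (vecMulVec x₁ (star x₂))) (Φ (vecMulVec x₂ (star x₁)))
      (Φ (vecMulVec x₂ (star x₂)))).PosSemidef := by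
    intro x₁ x₂
    refine h2 _ _ _ _ ?_
    convert posSemidef_vecMulVec_self_star (Sum.elim x₁ x₂) using 1
    ext (i | i) (j | j) <;> simp [vecMulVec_apply]
  refine ⟨?_, ?_, ?_⟩
  · intro x₁ y₁ x₂ y₂ h0
    have h := (Complex.le_def.mp ((hblock x₁ x₂).dotProduct_mulVec_nonneg (Sum.elim y₁ y₂))).1
    have hs : star (Sum.elim y₁ y₂) = Sum.elim (star y₁) (star y₂) := by
      ext (i | i) <;> rfl
    rw [hs, fromBlocks_mulVec] at h
    simp only [Sum.elim_comp_inl, Sum.elim_comp_inr, sumElim_dotProduct_sumElim,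
      dotProduct_add, Complex.zero_re] at h
    have h1 : star x₁ ⬝ᵥ y₁ + star x₂ ⬝ᵥ y₂ = 0 := by
      have := congrArg star h0
      rwa [star_add, star_zero, ← star_dotProduct, ← star_dotProduct] at this
    have key : choiForm (Φ - 1) (vecMulVec x₁ (star y₁) + vecMulVec x₂ (star y₂))
        (vecMulVec x₁ (star y₁) + vecMulVec x₂ (star y₂))
        = (star y₁ ⬝ᵥ Φ (vecMulVec x₁ (star x₁)) *ᵥ y₁ + star y₁ ⬝ᵥ Φ (vecMulVec x₁ (star x₂)) *ᵥ y₂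
          + (star y₂ ⬝ᵥ Φ (vecMulVec x₂ (star x₁)) *ᵥ y₁
            + star y₂ ⬝ᵥ Φ (vecMulVec x₂ (star x₂)) *ᵥ y₂)) := by
      simp only [map_add, LinearMap.add_apply, choiForm_vecMulVec, LinearMap.sub_apply,
        Module.End.one_apply, sub_mulVec, dotProduct_sub, vecMulVec_mulVec, dotProduct_smul,
        MulOpposite.smul_eq_mul_unop, MulOpposite.unop_op]
      linear_combination (-(star x₁ ⬝ᵥ y₁ + star x₂ ⬝ᵥ y₂)) * h0
    rw [key]
    exact h
  · intro X
    rw [LinearMap.sub_apply, trace_sub, hTP, Module.End.one_apply, sub_self]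
  · intro x y
    have h := (hblock x y).1
    rw [IsHermitian, fromBlocks_conjTranspose] at h
    have h3 := (fromBlocks_inj.mp h).2.1
    rw [LinearMap.sub_apply, LinearMap.sub_apply, conjTranspose_sub, h3]
    simp [conjTranspose_vecMulVec]


/-! ### Orthonormal bases as columns of unitary matrices -/

theorem sum_vecMulVec_col {m : Type*} [Fintype m] (T : Matrix m m ℂ) :
    ∑ k, vecMulVec (T.col k) (star (T.col k)) = T * Tᴴ := by
  ext i j
  simp [Matrix.sum_apply, vecMulVec_apply, mul_apply]

theorem sum_vecMulVec_col_of_mem {V : Matrix n n ℂ} (hV : V ∈ unitaryGroup n ℂ) :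
    ∑ k, vecMulVec (V.col k) (star (V.col k)) = 1 := by
  rw [sum_vecMulVec_col, ← star_eq_conjTranspose, mem_unitaryGroup_iff.mp hV]

theorem star_col_dotProduct_col {V : Matrix n n ℂ} (hV : V ∈ unitaryGroup n ℂ) (k l : n) :
    star (V.col k) ⬝ᵥ V.col l = if k = l then 1 else 0 := by
  have h := congrFun (congrFun (mem_unitaryGroup_iff'.mp hV) k) l
  rw [one_apply] at h
  exact h

/-! ### Consequences of conditional 2-positivity -/

namespace IsCondTwoPos
variable {L : Module.End ℂ (Matrix n n ℂ)}

/-- Summing `y* L(xz*) y` over an orthonormal basis gives the trace of `L(xz*)`, which is zero. -/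
theorem sum_choiForm_col (hL : IsCondTwoPos L) {U : Matrix n n ℂ} (hU : U ∈ unitaryGroup n ℂ)
    (x x' : n → ℂ) :
    ∑ j, choiForm L (vecMulVec x (star (U.col j))) (vecMulVec x' (star (U.col j))) = 0 := by
  rw [← hL.trace_eq_zero (vecMulVec x (star x')), ← trace_unitary_conj hU]
  refine Finset.sum_congr rfl fun j _ => ?_
  rw [choiForm_vecMulVec, diag_apply, mul_assoc]; rfl

/-- The terms of `∑ⱼ B(vₖ vⱼ*, vₖ vⱼ*) = 0` with `j ≠ k` are nonnegative, so the remaining one is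
nonpositive. -/
theorem choiForm_proj_nonpos (hL : IsCondTwoPos L) {V : Matrix n n ℂ}
    (hV : V ∈ unitaryGroup n ℂ) (k : n) :
    (choiForm L (vecMulVec (V.col k) (star (V.col k)))
      (vecMulVec (V.col k) (star (V.col k)))).re ≤ 0 := by
  have h := congrArg Complex.re (hL.sum_choiForm_col hV (V.col k) (V.col k))
  rw [← Finset.add_sum_erase _ _ (Finset.mem_univ k), Complex.add_re, Complex.re_sum,
    Complex.zero_re] at h
  have h2 : 0 ≤ ∑ j ∈ Finset.univ.erase k, (choiForm L (vecMulVec (V.col k) (star (V.col j)))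
      (vecMulVec (V.col k) (star (V.col j)))).re := by
    refine Finset.sum_nonneg fun j hj => ?_
    have := hL.pos (V.col k) (V.col j) 0 0 (by
      rw [star_col_dotProduct_col hV, if_neg (Finset.ne_of_mem_erase hj)]; simp)
    simpa using this
  linarith

/-- Positivity of the form at the traceless matrix `vₖ vₖ* - vₗ vₗ*`. -/
theorem choiForm_proj_add_le (hL : IsCondTwoPos L) {V : Matrix n n ℂ}
    (hV : V ∈ unitaryGroup n ℂ) (k l : n) :
    (choiForm L (vecMulVec (V.col k) (star (V.col k))) (vecMulVec (V.col l) (star (V.col l)))).re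
      + (choiForm L (vecMulVec (V.col l) (star (V.col l)))
        (vecMulVec (V.col k) (star (V.col k)))).re
    ≤ (choiForm L (vecMulVec (V.col k) (star (V.col k)))
        (vecMulVec (V.col k) (star (V.col k)))).re
      + (choiForm L (vecMulVec (V.col l) (star (V.col l)))
        (vecMulVec (V.col l) (star (V.col l)))).re := by
  have h := hL.pos (V.col k) (V.col k) (-V.col l) (V.col l) (by
    rw [dotProduct_neg, star_col_dotProduct_col hV, star_col_dotProduct_col hV]; simp)
  simp only [neg_vecMulVec, map_add, map_neg, LinearMap.add_apply, LinearMap.neg_apply,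
    Complex.add_re, Complex.neg_re] at h
  linarith

theorem choiForm_sum_proj_le (hL : IsCondTwoPos L) {V : Matrix n n ℂ}
    (hV : V ∈ unitaryGroup n ℂ) (s : Finset n) :
    (choiForm L (∑ k ∈ s, vecMulVec (V.col k) (star (V.col k)))
      (∑ k ∈ s, vecMulVec (V.col k) (star (V.col k)))).re
    ≤ s.card * ∑ k ∈ s, (choiForm L (vecMulVec (V.col k) (star (V.col k)))
        (vecMulVec (V.col k) (star (V.col k)))).re := by
  set P : n → Matrix n n ℂ := fun k => vecMulVec (V.col k) (star (V.col k)) with hP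
  have h1 : (choiForm L (∑ k ∈ s, P k) (∑ k ∈ s, P k)).re
      = ∑ k ∈ s, ∑ l ∈ s, (choiForm L (P k) (P l)).re := by
    simp only [map_sum, LinearMap.sum_apply, Complex.re_sum]
    rw [Finset.sum_comm]
  have h2 : ∑ k ∈ s, ∑ l ∈ s, ((choiForm L (P k) (P l)).re + (choiForm L (P l) (P k)).re)
      ≤ ∑ k ∈ s, ∑ l ∈ s, ((choiForm L (P k) (P k)).re + (choiForm L (P l) (P l)).re) :=
    Finset.sum_le_sum fun k _ => Finset.sum_le_sum fun l _ => hL.choiForm_proj_add_le hV k l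
  simp only [Finset.sum_add_distrib, Finset.sum_const, nsmul_eq_mul, ← Finset.mul_sum] at h2
  rw [Finset.sum_comm (f := fun k l => (choiForm L (P l) (P k)).re)] at h2
  change (choiForm L (∑ k ∈ s, P k) (∑ k ∈ s, P k)).re ≤ _
  rw [h1]
  linarith

theorem choiForm_one_one_nonpos (hL : IsCondTwoPos L) : (choiForm L 1 1).re ≤ 0 := by
  have h := hL.choiForm_sum_proj_le (one_mem (unitaryGroup n ℂ)) Finset.univ
  rw [sum_vecMulVec_col_of_mem (one_mem _)] at h
  refine h.trans (mul_nonpos_of_nonneg_of_nonpos (Nat.cast_nonneg _) ?_)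
  exact Finset.sum_nonpos fun k _ => hL.choiForm_proj_nonpos (one_mem _) k

/-- Expansion of `∑ⱼ Re B(Rⱼ - c τⱼ T, Rⱼ - c τⱼ T)`; the cross terms only see the combination
`D = ∑ⱼ τ̄ⱼ Rⱼ`. -/
theorem sum_choiForm_sub (R : n → Matrix n n ℂ) (τ : n → ℂ) (hτ : ∑ j, star (τ j) * τ j = 1)
    {D : Matrix n n ℂ} (hD : ∑ j, star (τ j) • R j = D) (c : ℝ) (T : Matrix n n ℂ) :
    ∑ j, (choiForm L (R j - ((c : ℂ) * τ j) • T) (R j - ((c : ℂ) * τ j) • T)).re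
      = ∑ j, (choiForm L (R j) (R j)).re
        - c * ((choiForm L D T).re + (choiForm L T D).re) + c ^ 2 * (choiForm L T T).re := by
  have hτ' : ∑ j, τ j * star (τ j) = 1 := by simpa only [mul_comm] using hτ
  have h1 : choiForm L D T = ∑ j, star (τ j) * choiForm L (R j) T := by
    simp [← hD, map_sum, LinearMap.sum_apply]
  have h2 : choiForm L T D = ∑ j, τ j * choiForm L T (R j) := by
    simp [← hD, map_sum]
  have h3 : ∑ j, choiForm L (R j - ((c : ℂ) * τ j) • T) (R j - ((c : ℂ) * τ j) • T)
      = ∑ j, choiForm L (R j) (R j) - c * (choiForm L D T + choiForm L T D)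
        + c ^ 2 * choiForm L T T := by
    have h4 : (c : ℂ) ^ 2 * choiForm L T T
        = ∑ j, star (τ j) * τ j * (c ^ 2 * choiForm L T T) := by
      rw [← Finset.sum_mul, hτ, one_mul]
    rw [h1, h2, h4, mul_add, Finset.mul_sum, Finset.mul_sum, ← Finset.sum_add_distrib,
      ← Finset.sum_sub_distrib, ← Finset.sum_add_distrib]
    refine Finset.sum_congr rfl fun j _ => ?_
    simp only [map_sub, LinearMap.sub_apply, map_smul, LinearMap.smul_apply, map_smulₛₗ,
      smul_eq_mul, map_mul, Complex.conj_ofReal, Complex.star_def]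
    ring
  have h5 := congrArg Complex.re h3
  rw [← Complex.ofReal_pow] at h5
  simpa only [Complex.re_sum, Complex.add_re, Complex.sub_re, Complex.re_ofReal_mul] using h5

/-- The sum `∑ⱼ Re B(Rⱼ, Rⱼ)` for `Rⱼ = (v + κ̄ⱼ u) yⱼ*`. The diagonal terms in `v` and `u` vanish
by `sum_choiForm_col`, and the two mixed ones are conjugate to each other. -/
theorem sum_choiForm_eq (hL : IsCondTwoPos L) {W U : Matrix n n ℂ} {κ : n → ℂ}
    (hU : U ∈ unitaryGroup n ℂ) (hκ : ∀ j, star (κ j) * κ j = 1)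
    (hWU : ∀ j, W *ᵥ U.col j = κ j • U.col j) (u v : n → ℂ) :
    ∑ j, (choiForm L (vecMulVec (v + star (κ j) • u) (star (U.col j)))
      (vecMulVec (v + star (κ j) • u) (star (U.col j)))).re
    = 2 * (L (vecMulVec v (star u)) * W).trace.re := by
  have h1 : (L (vecMulVec v (star u)) * W).trace
      = ∑ j, κ j * star (U.col j) ⬝ᵥ L (vecMulVec v (star u)) *ᵥ U.col j := by
    rw [← trace_unitary_conj hU]
    refine Finset.sum_congr rfl fun j _ => ?_
    have : (Uᴴ * (L (vecMulVec v (star u)) * W) * U) j j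
        = star (U.col j) ⬝ᵥ (L (vecMulVec v (star u)) *ᵥ (W *ᵥ U.col j)) := by
      rw [mulVec_mulVec, mul_assoc]; rfl
    rw [diag_apply, this, hWU, mulVec_smul, dotProduct_smul, smul_eq_mul]
  have h2 : ∀ j, star (U.col j) ⬝ᵥ L (vecMulVec u (star v)) *ᵥ U.col j
      = star (star (U.col j) ⬝ᵥ L (vecMulVec v (star u)) *ᵥ U.col j) := by
    intro j
    rw [hL.herm u v, dotProduct_mulVec, ← star_mulVec, star_dotProduct]
  have h3 := hL.sum_choiForm_col hU v v
  have h4 := hL.sum_choiForm_col hU u u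
  rw [h1, Complex.re_sum, Finset.mul_sum]
  have h5 : ∀ j, choiForm L (vecMulVec (v + star (κ j) • u) (star (U.col j)))
      (vecMulVec (v + star (κ j) • u) (star (U.col j)))
      = choiForm L (vecMulVec v (star (U.col j))) (vecMulVec v (star (U.col j)))
        + choiForm L (vecMulVec u (star (U.col j))) (vecMulVec u (star (U.col j)))
        + (κ j * star (U.col j) ⬝ᵥ L (vecMulVec v (star u)) *ᵥ U.col j
          + star (κ j * star (U.col j) ⬝ᵥ L (vecMulVec v (star u)) *ᵥ U.col j)) := by
    intro j
    rw [star_mul', ← h2 j, ← choiForm_vecMulVec, ← choiForm_vecMulVec]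
    simp only [add_vecMulVec, smul_vecMulVec, map_add, LinearMap.add_apply, map_smul,
      LinearMap.smul_apply, map_smulₛₗ, smul_eq_mul, Complex.star_def, Complex.conj_conj] at hκ ⊢
    linear_combination choiForm L (vecMulVec u (star (U.col j))) (vecMulVec u (star (U.col j))) * hκ j
  have h6 := congrArg Complex.re h3
  have h7 := congrArg Complex.re h4
  simp only [Complex.re_sum, Complex.zero_re] at h6 h7
  rw [Finset.sum_congr rfl fun j _ => congrArg Complex.re (h5 j)]
  simp only [Complex.add_re, Finset.sum_add_distrib, h6, h7, Complex.star_def,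
    Complex.conj_re, ← Finset.mul_sum]
  ring

end IsCondTwoPos

theorem sum_star_dotProduct_smul_col {U : Matrix n n ℂ} (hU : U ∈ unitaryGroup n ℂ) (x : n → ℂ) :
    ∑ j, (star (U.col j) ⬝ᵥ x) • U.col j = x := by
  have h := congrArg (· *ᵥ x) (sum_vecMulVec_col_of_mem hU)
  simpa [sum_mulVec, vecMulVec_mulVec] using h

/-- An orthonormal pair extends to an orthonormal basis, given as the columns of a unitary matrix. -/
theorem exists_unitary_cols {u v : n → ℂ} (hu : star u ⬝ᵥ u = 1) (hv : star v ⬝ᵥ v = 1)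
    (huv : star u ⬝ᵥ v = 0) :
    ∃ V ∈ unitaryGroup n ℂ, ∃ k l, k ≠ l ∧ V.col k = u ∧ V.col l = v := by
  -- Two orthogonal unit vectors cannot live in dimension one.
  have hnt : Nontrivial n := by
    by_contra hn
    rw [not_nontrivial_iff_subsingleton] at hn
    have hu0 : u ≠ 0 := by rintro rfl; simp at hu
    obtain ⟨i, hi⟩ := Function.ne_iff.mp hu0
    have hs := Fintype.sum_subsingleton (fun k => star (u k) * v k) i
    have hs2 := Fintype.sum_subsingleton (fun k => star (v k) * v k) i
    have e1 : star (u i) * v i = 0 := hs.symm.trans huv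
    have e2 : star (v i) * v i = 1 := hs2.symm.trans hv
    rcases mul_eq_zero.mp e1 with h | h
    · exact hi (by simpa using h)
    · rw [h] at e2; simp at e2
  obtain ⟨k, l, hkl⟩ := exists_pair_ne n
  let w : n → EuclideanSpace ℂ n := fun i => WithLp.toLp 2 (if i = k then u else v)
  have hw : Orthonormal ℂ (({k, l} : Set n).domRestrict w) := by
    have hvu : star v ⬝ᵥ u = 0 := by
      rw [star_dotProduct, huv, star_zero]
    rw [orthonormal_iff_ite]
    rintro ⟨i, hi⟩ ⟨j, hj⟩
    change inner ℂ (w i) (w j) = _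
    rw [EuclideanSpace.inner_eq_star_dotProduct, dotProduct_comm]
    rcases hi with rfl | rfl <;> rcases hj with rfl | rfl <;>
      simp [w, hkl.symm, hu, hv, huv, hvu, Subtype.ext_iff, hkl]
  obtain ⟨b, hb⟩ := hw.exists_orthonormalBasis_extension_of_card_eq (by simp)
  refine ⟨of fun i j => b j i, ?_, k, l, hkl, ?_, ?_⟩
  · rw [mem_unitaryGroup_iff']
    ext i j
    have h := orthonormal_iff_ite.mp b.orthonormal i j
    rw [EuclideanSpace.inner_eq_star_dotProduct, dotProduct_comm] at h
    rw [one_apply]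
    exact h
  · ext i
    simp [hb k (by simp), w]
  · ext i
    simp [hb l (by simp), w, hkl.symm]

/-! ### The key inequality -/

namespace IsCondTwoPos
variable {L : Module.End ℂ (Matrix n n ℂ)}

/-- The key inequality `Re tr L ≤ d · Re tr (L(vu*) W)` for `W` unitary and `u = W v` a unit vector
orthogonal to the unit vector `v`. -/
theorem re_choiForm_one_le (hL : IsCondTwoPos L) {W : Matrix n n ℂ} (hW : W ∈ unitaryGroup n ℂ)
    {u v : n → ℂ} (hu : star u ⬝ᵥ u = 1) (hv : star v ⬝ᵥ v = 1) (huv : star u ⬝ᵥ v = 0)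
    (hWv : W *ᵥ v = u) :
    (choiForm L 1 1).re ≤ Fintype.card n * (L (vecMulVec v (star u)) * W).trace.re := by
  obtain ⟨U, hU, κ, hκW⟩ := exists_unitary_eigenbasis hW
  obtain ⟨V, hV, k₀, k₁, hk, hk₀, hk₁⟩ := exists_unitary_cols hu hv huv
  have hvu : star v ⬝ᵥ u = 0 := by rw [star_dotProduct, huv, star_zero]
  have hyy : ∀ j, star (U.col j) ⬝ᵥ U.col j = 1 := fun j => by
    rw [star_col_dotProduct_col hU, if_pos rfl]
  have hWW : Wᴴ * W = 1 := mem_unitaryGroup_iff'.mp hW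
  have hκ : ∀ j, star (κ j) * κ j = 1 := by
    intro j
    have h : star (W *ᵥ U.col j) ⬝ᵥ W *ᵥ U.col j = 1 := by
      rw [star_mulVec, ← dotProduct_mulVec, mulVec_mulVec, hWW, one_mulVec, hyy]
    rwa [hκW, star_smul, smul_dotProduct, dotProduct_smul, hyy, smul_eq_mul, smul_eq_mul,
      mul_one] at h
  set τ : n → ℂ := fun j => star (U.col j) ⬝ᵥ v with hτdef
  have hτu : ∀ j, star (U.col j) ⬝ᵥ u = κ j * τ j := by
    intro j
    have h : κ j • star (U.col j) = star (U.col j) ᵥ* W := by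
      have h1 : Wᴴ *ᵥ U.col j = star (κ j) • U.col j := by
        have h2 := congrArg (Wᴴ *ᵥ ·) (hκW j)
        simp only [mulVec_mulVec, hWW, one_mulVec, mulVec_smul] at h2
        conv_rhs => rw [h2, smul_smul, hκ, one_smul]
      have h3 := congrArg star h1
      rw [star_mulVec, conjTranspose_conjTranspose, star_smul, star_star] at h3
      exact h3.symm
    rw [← hWv, dotProduct_mulVec, ← h, smul_dotProduct, smul_eq_mul]
  have hτ : ∑ j, star (τ j) * τ j = 1 := by
    have h := congrArg (star v ⬝ᵥ ·) (sum_star_dotProduct_smul_col hU v)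
    simp only [dotProduct_sum, dotProduct_smul, smul_eq_mul, hv] at h
    rw [← h]
    refine Finset.sum_congr rfl fun j _ => ?_
    rw [mul_comm, hτdef, ← star_dotProduct]
  have hdyad : ∀ z x : n → ℂ, ∑ j, star (star (U.col j) ⬝ᵥ x) • vecMulVec z (star (U.col j))
      = vecMulVec z (star x) := by
    intro z x
    conv_rhs => rw [← sum_star_dotProduct_smul_col hU x]
    ext i l
    simp only [Matrix.sum_apply, Matrix.smul_apply, vecMulVec_apply, Pi.star_apply,
      Finset.sum_apply, Pi.smul_apply, star_sum, star_smul, Finset.mul_sum, smul_eq_mul]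
    exact Finset.sum_congr rfl fun j _ => by ring
  set P : n → Matrix n n ℂ := fun k => vecMulVec (V.col k) (star (V.col k)) with hP
  set R : n → Matrix n n ℂ := fun j => vecMulVec (v + star (κ j) • u) (star (U.col j)) with hR
  set D : Matrix n n ℂ := vecMulVec v (star v) + vecMulVec u (star u) with hDdef
  have hD : ∑ j, star (τ j) • R j = D := by
    rw [hDdef, ← hdyad v v, ← hdyad u u, ← Finset.sum_add_distrib]
    refine Finset.sum_congr rfl fun j _ => ?_
    simp only [hτu, hR, add_vecMulVec, smul_vecMulVec, smul_add, smul_smul, star_mul',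
      mul_comm (star (κ j))]
    rfl
  set S := ∑ j, (choiForm L (R j) (R j)).re with hS
  have hS2 : S = 2 * (L (vecMulVec v (star u)) * W).trace.re :=
    hL.sum_choiForm_eq hU hκ hκW u v
  -- Positivity at `Rⱼ - 2 τⱼ Pₖ`, summed over `j`.
  have hPk : ∀ k, 2 * ((choiForm L D (P k)).re + (choiForm L (P k) D).re)
      - 4 * (choiForm L (P k) (P k)).re ≤ S := by
    intro k
    have h := sum_choiForm_sub (L := L) R τ hτ hD 2 (P k)
    have h0 : 0 ≤ ∑ j, (choiForm L (R j - (((2 : ℝ) : ℂ) * τ j) • P k)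
        (R j - (((2 : ℝ) : ℂ) * τ j) • P k)).re := by
      refine Finset.sum_nonneg fun j _ => ?_
      have h1 := hL.pos (v + star (κ j) • u) (U.col j) (-(2 * τ j) • V.col k) (V.col k) (by
        rw [dotProduct_add, dotProduct_smul, dotProduct_smul, hτu, star_col_dotProduct_col hV,
          if_pos rfl, smul_eq_mul, smul_eq_mul]
        linear_combination τ j * hκ j)
      rw [smul_vecMulVec, neg_smul, ← sub_eq_add_neg] at h1
      rw [Complex.ofReal_ofNat]
      exact h1
    rw [h] at h0
    linarith
  -- Positivity at `Rⱼ - τⱼ D = v (yⱼ - τ̄ⱼ v)* + u (κⱼ yⱼ - τ̄ⱼ u)*`, summed over `j`.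
  have hDD : (choiForm L D D).re ≤ S := by
    have h := sum_choiForm_sub (L := L) R τ hτ hD 1 D
    have h0 : 0 ≤ ∑ j, (choiForm L (R j - (((1 : ℝ) : ℂ) * τ j) • D)
        (R j - (((1 : ℝ) : ℂ) * τ j) • D)).re := by
      refine Finset.sum_nonneg fun j _ => ?_
      have h1 := hL.pos v (U.col j - star (τ j) • v) u (κ j • U.col j - star (τ j) • u) (by
        simp only [star_sub, star_smul, sub_dotProduct, smul_dotProduct, star_star, hv, hu, hτu,
          smul_eq_mul]
        linear_combination τ j * hκ j)
      have h2 : R j - (((1 : ℝ) : ℂ) * τ j) • D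
          = vecMulVec v (star (U.col j - star (τ j) • v))
            + vecMulVec u (star (κ j • U.col j - star (τ j) • u)) := by
        simp only [hR, hDdef, star_sub, star_smul, star_star, add_vecMulVec, smul_vecMulVec,
          vecMulVec_sub, vecMulVec_smul, Complex.ofReal_one, one_mul, smul_add]
        abel
      rw [h2]; exact h1
    rw [h] at h0
    linarith
  set s : Finset n := (Finset.univ.erase k₀).erase k₁ with hs
  have hk₁mem : k₁ ∈ Finset.univ.erase k₀ := by simp [hk.symm]
  have hcard : (s.card : ℝ) + 2 = Fintype.card n := by
    have h1 := Finset.card_erase_add_one hk₁mem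
    have h2 := Finset.card_erase_add_one (Finset.mem_univ k₀)
    rw [← hs] at h1
    rw [Finset.card_univ] at h2
    have h3 : s.card + 2 = Fintype.card n := by omega
    exact_mod_cast h3
  set E := ∑ k ∈ s, P k with hE
  have hone : (1 : Matrix n n ℂ) = D + E := by
    rw [← sum_vecMulVec_col_of_mem hV, ← Finset.add_sum_erase _ _ (Finset.mem_univ k₀),
      ← Finset.add_sum_erase _ _ hk₁mem, hk₀, hk₁, hDdef]
    simp only [hE, hP, hs]
    abel
  have hsum := Finset.sum_le_sum fun k (_ : k ∈ s) => hPk k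
  rw [Finset.sum_sub_distrib, ← Finset.mul_sum, ← Finset.mul_sum, Finset.sum_add_distrib,
    Finset.sum_const, nsmul_eq_mul] at hsum
  have hDE : (choiForm L D E).re = ∑ k ∈ s, (choiForm L D (P k)).re := by
    rw [hE, map_sum, Complex.re_sum]
  have hED : (choiForm L E D).re = ∑ k ∈ s, (choiForm L (P k) D).re := by
    rw [hE, map_sum, LinearMap.sum_apply, Complex.re_sum]
  -- `E` is the projection onto the orthogonal complement of `u` and `v`.
  have hEE : (choiForm L E E).re ≤ s.card * ∑ k ∈ s, (choiForm L (P k) (P k)).re :=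
    hL.choiForm_sum_proj_le hV s
  have hneg : ∑ k ∈ s, (choiForm L (P k) (P k)).re ≤ 0 :=
    Finset.sum_nonpos fun k _ => hL.choiForm_proj_nonpos hV k
  have hEE0 : (s.card : ℝ) * ∑ k ∈ s, (choiForm L (P k) (P k)).re ≤ 0 :=
    mul_nonpos_of_nonneg_of_nonpos (Nat.cast_nonneg _) hneg
  rw [← hDE, ← hED] at hsum
  have h11 : (choiForm L 1 1).re = (choiForm L D D).re + (choiForm L D E).re
      + ((choiForm L E D).re + (choiForm L E E).re) := by
    rw [hone]
    simp only [map_add, LinearMap.add_apply, Complex.add_re]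
    ring
  rw [h11, ← hcard]
  have hX : (L (vecMulVec v (star u)) * W).trace.re = S / 2 := by linarith
  rw [hX]
  linarith

end IsCondTwoPos

open scoped MatrixOrder in
theorem exists_eq_conjTranspose_mul_self {P : Matrix n n ℂ} (hP : P.PosSemidef) :
    ∃ B : Matrix n n ℂ, P = Bᴴ * B :=
  CStarAlgebra.nonneg_iff_eq_star_mul_self.mp hP.nonneg

/-! ### Eigenvalues -/

namespace IsCondTwoPos
variable {L : Module.End ℂ (Matrix n n ℂ)}

/-- `re_choiForm_one_le` for the pair `u = p`, `v = W* p`, without normalisation of `p`. -/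
theorem re_choiForm_one_mul_le (hL : IsCondTwoPos L) {W : Matrix n n ℂ}
    (hW : W ∈ unitaryGroup n ℂ) {p : n → ℂ} (hp : star p ⬝ᵥ Wᴴ *ᵥ p = 0) :
    (choiForm L 1 1).re * (star p ⬝ᵥ p).re
      ≤ Fintype.card n * (L (vecMulVec (Wᴴ *ᵥ p) (star p)) * W).trace.re := by
  by_cases hp0 : p = 0
  · simp [hp0]
  have hpos : 0 < star p ⬝ᵥ p := dotProduct_star_self_pos_iff.mpr hp0
  obtain ⟨r, hr, hrp⟩ : ∃ r : ℝ, 0 < r ∧ star p ⬝ᵥ p = r :=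
    ⟨(star p ⬝ᵥ p).re, (Complex.pos_iff.mp hpos).1,
      Complex.eq_re_of_ofReal_le (r := 0) hpos.le⟩
  have hWW : W * Wᴴ = 1 := mem_unitaryGroup_iff.mp hW
  set a : ℂ := ((√r : ℝ) : ℂ)⁻¹ with ha
  have has : star a = a := by simp [ha]
  have haa : a * a * r = 1 := by
    have hs : ((√r : ℝ) : ℂ) * (√r : ℝ) = r := by
      rw [← Complex.ofReal_mul, Real.mul_self_sqrt hr.le]
    have hr0 : ((√r : ℝ) : ℂ) ≠ 0 := by simpa using (Real.sqrt_pos.mpr hr).ne'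
    rw [← hs, ha]; field_simp
  have hv : star (Wᴴ *ᵥ p) ⬝ᵥ Wᴴ *ᵥ p = r := by
    rw [star_mulVec, conjTranspose_conjTranspose, ← dotProduct_mulVec, mulVec_mulVec, hWW,
      one_mulVec, hrp]
  have h := hL.re_choiForm_one_le hW (u := a • p) (v := a • Wᴴ *ᵥ p)
    (by rw [star_smul, smul_dotProduct, dotProduct_smul, has, hrp, smul_eq_mul, smul_eq_mul,
          ← mul_assoc, haa])
    (by rw [star_smul, smul_dotProduct, dotProduct_smul, has, hv, smul_eq_mul, smul_eq_mul,
          ← mul_assoc, haa])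
    (by rw [star_smul, smul_dotProduct, dotProduct_smul, hp, smul_zero, smul_zero])
    (by rw [mulVec_smul, mulVec_mulVec, hWW, one_mulVec])
  have h2 : (L (vecMulVec (Wᴴ *ᵥ p) (star p)) * W).trace
      = r * (L (vecMulVec (a • Wᴴ *ᵥ p) (star (a • p))) * W).trace := by
    rw [star_smul, has, smul_vecMulVec, vecMulVec_smul, smul_smul, map_smul, smul_mul_assoc,
      trace_smul, smul_eq_mul, ← mul_assoc, mul_comm (r : ℂ), haa, one_mul]
  rw [h2, hrp, Complex.re_ofReal_mul, Complex.ofReal_re]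
  linarith [mul_le_mul_of_nonneg_right h hr.le]

/-- Every eigenvalue `ℓ` of `L` satisfies `Re tr L ≤ d · Re ℓ`. -/
theorem re_trace_le_card_mul_re (hL : IsCondTwoPos L) {ℓ : ℂ} {Y : Matrix n n ℂ} (hY : Y ≠ 0)
    (hℓ : L Y = ℓ • Y) : (LinearMap.trace ℂ _ L).re ≤ Fintype.card n * ℓ.re := by
  rw [← choiForm_one_one]
  by_cases htr : Y.trace = 0
  -- A nonzero trace forces `ℓ = 0`.
  swap
  · have h := hL.trace_eq_zero Y
    rw [hℓ, trace_smul, smul_eq_mul, mul_eq_zero, or_iff_left htr] at h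
    simpa [h] using hL.choiForm_one_one_nonpos
  obtain ⟨W, hW, hP⟩ := exists_unitary_mul_posSemidef Y
  have hWW : Wᴴ * W = 1 := mem_unitaryGroup_iff'.mp hW
  obtain ⟨B, hB⟩ := exists_eq_conjTranspose_mul_self hP
  have hYP : Y = Wᴴ * (Bᴴ * B) := by rw [← hB, ← mul_assoc, hWW, one_mul]
  obtain ⟨U, hU, hdiag⟩ := exists_unitary_diag_eq_zero (Z := B * Wᴴ * Bᴴ) (by
    rw [trace_mul_comm, ← mul_assoc, trace_mul_comm, ← hYP, htr])
  set T := Bᴴ * U with hT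
  have hTT : T * Tᴴ = W * Y := by
    rw [hB, hT, conjTranspose_mul, conjTranspose_conjTranspose, mul_assoc, ← mul_assoc U,
      ← star_eq_conjTranspose U, mem_unitaryGroup_iff.mp hU, one_mul]
  have hp : ∀ k, star (T.col k) ⬝ᵥ Wᴴ *ᵥ T.col k = 0 := by
    intro k
    rw [← hdiag k, show Uᴴ * (B * Wᴴ * Bᴴ) * U = Tᴴ * (Wᴴ * T) by
      rw [hT, conjTranspose_mul, conjTranspose_conjTranspose]; simp only [mul_assoc]]
    rfl
  have hsum : ∑ k, vecMulVec (Wᴴ *ᵥ T.col k) (star (T.col k)) = Y := by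
    simp only [← mul_vecMulVec]
    rw [← Finset.mul_sum, sum_vecMulVec_col, hTT, ← mul_assoc, hWW, one_mul]
  have hnorm : ∑ k, star (T.col k) ⬝ᵥ T.col k = (W * Y).trace := by
    rw [← hTT, trace_mul_comm]; rfl
  have h := Finset.sum_le_sum fun k (_ : k ∈ Finset.univ) => hL.re_choiForm_one_mul_le hW (hp k)
  rw [← Finset.mul_sum, ← Finset.mul_sum, ← Complex.re_sum, ← Complex.re_sum, hnorm, ← trace_sum,
    ← Finset.sum_mul, ← map_sum, hsum, hℓ, smul_mul_assoc, trace_smul, trace_mul_comm Y,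
    smul_eq_mul] at h
  have hP0 : (W * Y).trace ≠ 0 := by
    rw [Ne, hP.trace_eq_zero_iff]
    intro h0
    exact hY (by rw [← one_mul Y, ← hWW, mul_assoc, h0, mul_zero])
  have ht := Complex.pos_iff.mp (lt_of_le_of_ne hP.trace_nonneg hP0.symm)
  rw [Complex.mul_re, ← ht.2, mul_zero, sub_zero, ← mul_assoc] at h
  exact le_of_mul_le_mul_right h ht.1

end IsCondTwoPos
end

/-- Any 2-positive trace-preserving map Φ on d×d complex matrices satisfies
tr(Φ) ≤ d·min Re σ(Φ) + (d² − d). -/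
theorem trace_le_of_twoPos_tracePreserving (d : ℕ) (hd : 1 ≤ d)
    (Φ : Module.End ℂ (Matrix (Fin d) (Fin d) ℂ))
    (h2 : IsTwoPos ⇑Φ) (hTP : IsTracePreserving ⇑Φ) :
    (LinearMap.trace ℂ (Matrix (Fin d) (Fin d) ℂ) Φ).re ≤
      d * sInf (Complex.re '' spectrum ℂ Φ) + ((d : ℝ) ^ 2 - d) := by
  have hne : Nonempty (Fin d) := ⟨⟨0, hd⟩⟩
  -- The spectrum is finite and nonempty, so the infimum of the real parts is attained.
  have hfin : (spectrum ℂ Φ).Finite := Module.End.finite_spectrum Φ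
  obtain ⟨μ, hμ⟩ := Module.End.exists_eigenvalue Φ
  have hmem := Set.Nonempty.csInf_mem
    (Set.Nonempty.image Complex.re ⟨μ, Module.End.hasEigenvalue_iff_mem_spectrum.mp hμ⟩)
    (hfin.image Complex.re)
  obtain ⟨lam, hlam, hre⟩ := hmem
  rw [← hre]
  obtain ⟨Y, hY⟩ := (Module.End.hasEigenvalue_iff_mem_spectrum.mpr hlam).exists_hasEigenvector
  have h := (isCondTwoPos_sub_one h2 hTP).re_trace_le_card_mul_re (ℓ := lam - 1) hY.2 (by
    rw [LinearMap.sub_apply, hY.apply_eq_smul, Module.End.one_apply, sub_smul, one_smul])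
  rw [map_sub, LinearMap.trace_one, Module.finrank_matrix, Fintype.card_fin] at h
  simp only [Complex.sub_re, Complex.one_re] at h
  push_cast at h
  simp at h
  nlinarith
end

section
/- Let d ≥ 1 and let Φ : ℂ^{d×d} → ℂ^{d×d} be a 2-positive, trace-preserving linear map such that there is a real eigenvalue λ of Φ with λ = min Re σ(Φ) (i.e., the eigenvalue with smallest real part is itself real). Then tr(Φ) ≤ d·λ + (d² − d). -/
/-!
The bound holds for every real eigenvalue `lam` of `Φ`.

A 2-positive map preserves adjoints, so a real eigenvalue has a nonzero Hermitian eigenvector `X`.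
Conjugating `Φ` by a unitary that diagonalizes `X` changes neither the trace nor the hypotheses,
so `X` may be taken diagonal. Write `E k l` for the matrix units and put `P k l = (Φ (E l l)) k k`.

* Positivity and trace preservation make `P` column-stochastic, and the diagonal of `X` is an
  eigenvector of `P` for `lam`. All eigenvalues of `P` have real part at most `1`, so
  `tr P ≤ lam + (d - 1)` (`re_trace_le_of_stochastic`).
* Applying 2-positivity to the rank-one block matrix `[[E k k, E k l], [E l k, E l l]]` gives
  `2 Re (Φ (E k l)) k l ≤ P k k + P l l`; summing over `k` and `l` gives `Re tr Φ ≤ d tr P`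
  (`re_trace_le_diag`).

Together, `Re tr Φ ≤ d (lam + d - 1)`.
-/

open Matrix
open scoped ComplexOrder

/-- By Gershgorin's theorem: the disc centred at `Q k k` with radius `1 - Q k k` lies in the
half-plane `Re ≤ 1`. -/
lemma re_le_one_of_rowStochastic {d : ℕ} (Q : Matrix (Fin d) (Fin d) ℂ)
    (h0 : ∀ i j, 0 ≤ Q i j) (h1 : ∀ i, ∑ j, Q i j = 1) (μ : ℂ)
    (hμ : μ ∈ spectrum ℂ Q) : μ.re ≤ 1 := by
  rw [← Matrix.spectrum_toLin', ← Module.End.hasEigenvalue_iff_mem_spectrum] at hμ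
  obtain ⟨k, hk⟩ := eigenvalue_mem_ball hμ
  rw [mem_closedBall_iff_norm] at hk
  have hn : ∀ j, ‖Q k j‖ = (Q k j).re := fun j => by
    conv_lhs => rw [Complex.eq_re_of_ofReal_le (h0 k j)]
    rw [Complex.norm_real, Real.norm_of_nonneg (Complex.nonneg_iff.1 (h0 k j)).1]
  simp_rw [hn] at hk
  have hs : ∑ j, (Q k j).re = 1 := by
    rw [← Complex.re_sum, h1 k, Complex.one_re]
  rw [← Finset.add_sum_erase _ _ (Finset.mem_univ k)] at hs
  have := Complex.re_le_norm (μ - Q k k)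
  rw [Complex.sub_re] at this
  linarith

lemma re_trace_le_of_stochastic {d : ℕ} (P : Matrix (Fin d) (Fin d) ℂ)
    (h0 : ∀ i j, 0 ≤ P i j) (h1 : ∀ j, ∑ i, P i j = 1) (lam : ℝ)
    (hlam : (lam : ℂ) ∈ spectrum ℂ P) : P.trace.re ≤ lam + (d - 1) := by
  have hroot : (lam : ℂ) ∈ P.charpoly.roots := by
    rw [Polynomial.mem_roots P.charpoly_monic.ne_zero]
    exact Matrix.mem_spectrum_iff_isRoot_charpoly.1 hlam
  have hle : ∀ μ ∈ P.charpoly.roots, μ.re ≤ 1 := by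
    intro μ hμ
    rw [Polynomial.mem_roots P.charpoly_monic.ne_zero, ← Matrix.charpoly_transpose] at hμ
    exact re_le_one_of_rowStochastic Pᵀ (fun i j => h0 j i) h1 μ
      (Matrix.mem_spectrum_iff_isRoot_charpoly.2 hμ)
  have hcard : P.charpoly.roots.card = d := by
    rw [← (IsAlgClosed.splits P.charpoly).natDegree_eq_card_roots,
      Matrix.charpoly_natDegree_eq_dim, Fintype.card_fin]
  obtain ⟨s, hs⟩ := Multiset.exists_cons_of_mem hroot
  rw [Matrix.trace_eq_sum_roots_charpoly, hs, Multiset.sum_cons, Complex.add_re,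
    Complex.ofReal_re]
  rw [hs, Multiset.card_cons] at hcard
  have hsum : s.sum.re ≤ s.card := by
    have h := Multiset.sum_le_card_nsmul (s.map Complex.re) 1 (by
      intro x hx
      obtain ⟨μ, hμ, rfl⟩ := Multiset.mem_map.1 hx
      exact hle μ (hs ▸ Multiset.mem_cons_of_mem hμ))
    have e : s.sum.re = (s.map Complex.re).sum := map_multiset_sum Complex.reAddGroupHom s
    rw [e]
    simpa using h
  have : (d : ℝ) = s.card + 1 := by exact_mod_cast hcard.symm
  linarith

/-- 2-positivity applied to the rank-one block matrix built from matrix units. -/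
lemma IsTwoPos.posSemidef_single {d : ℕ} {Φ : Matrix (Fin d) (Fin d) ℂ → Matrix (Fin d) (Fin d) ℂ}
    (h2 : IsTwoPos Φ) (k l : Fin d) :
    (Matrix.fromBlocks (Φ (single k k 1)) (Φ (single k l 1))
      (Φ (single l k 1)) (Φ (single l l 1))).PosSemidef := by
  apply h2
  have h := posSemidef_vecMulVec_self_star
    (Sum.elim (Pi.single k 1) (Pi.single l 1) : Fin d ⊕ Fin d → ℂ)
  convert h using 1
  ext (i | i) (j | j) <;>
    simp [vecMulVec_apply, Matrix.single_apply, Pi.single_apply, ← ite_and, and_comm, eq_comm]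

/-- Quadratic form of a positive semidefinite matrix at `e a - e b`. -/
lemma two_re_le_of_posSemidef {n : Type*} [Fintype n] [DecidableEq n] {N : Matrix n n ℂ}
    (hN : N.PosSemidef) (a b : n) : 2 * (N a b).re ≤ (N a a).re + (N b b).re := by
  have h := hN.dotProduct_mulVec_nonneg (Pi.single a 1 - Pi.single b 1)
  have hr := (Complex.nonneg_iff.1 h).1
  have hh : (N b a).re = (N a b).re := by
    rw [← hN.1.apply a b]; simp
  simp [Matrix.mulVec_sub, sub_dotProduct, dotProduct_sub] at hr
  linarith

lemma trace_eq_sum_single {d : ℕ} (Φ : Module.End ℂ (Matrix (Fin d) (Fin d) ℂ)) :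
    LinearMap.trace ℂ (Matrix (Fin d) (Fin d) ℂ) Φ = ∑ k, ∑ l, Φ (single k l 1) k l := by
  rw [LinearMap.trace_eq_matrix_trace ℂ (Matrix.stdBasis ℂ (Fin d) (Fin d)), Matrix.trace,
    Fintype.sum_prod_type]
  refine Finset.sum_congr rfl fun k _ => Finset.sum_congr rfl fun l _ => ?_
  rw [Matrix.diag_apply, LinearMap.toMatrix_apply, Matrix.stdBasis_eq_single]
  simp [Matrix.stdBasis]

lemma re_trace_le_diag {d : ℕ} (Φ : Module.End ℂ (Matrix (Fin d) (Fin d) ℂ))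
    (h2 : IsTwoPos ⇑Φ) :
    (LinearMap.trace ℂ (Matrix (Fin d) (Fin d) ℂ) Φ).re ≤
      d * ∑ k, (Φ (single k k 1) k k).re := by
  have hkl : ∀ k l, (Φ (single k l 1) k l).re ≤
      ((Φ (single k k 1) k k).re + (Φ (single l l 1) l l).re) / 2 := by
    intro k l
    have := two_re_le_of_posSemidef (h2.posSemidef_single k l) (Sum.inl k) (Sum.inr l)
    simp only [fromBlocks_apply₁₁, fromBlocks_apply₁₂, fromBlocks_apply₂₂] at this
    linarith
  rw [trace_eq_sum_single, Complex.re_sum]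
  simp_rw [Complex.re_sum]
  refine (Finset.sum_le_sum fun k _ => Finset.sum_le_sum fun l _ => hkl k l).trans_eq ?_
  simp only [← Finset.sum_div, Finset.sum_add_distrib, Finset.sum_const, Finset.card_univ,
    Fintype.card_fin, nsmul_eq_mul, ← Finset.mul_sum]
  ring

/-- The bound when the eigenvector is a diagonal matrix. -/
lemma re_trace_le_of_diagonal {d : ℕ} (Φ : Module.End ℂ (Matrix (Fin d) (Fin d) ℂ))
    (h2 : IsTwoPos ⇑Φ) (hTP : IsTracePreserving ⇑Φ) (lam : ℝ) (x : Fin d → ℂ) (hx : x ≠ 0)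
    (hΦ : Φ (diagonal x) = (lam : ℂ) • diagonal x) :
    (LinearMap.trace ℂ (Matrix (Fin d) (Fin d) ℂ) Φ).re ≤ d * (lam + (d - 1)) := by
  let P : Matrix (Fin d) (Fin d) ℂ := Matrix.of fun k l => Φ (single l l 1) k k
  have h0 : ∀ k l, 0 ≤ P k l := fun k l =>
    (h2.posSemidef_single l l).diag_nonneg (i := Sum.inl k)
  have h1 : ∀ l, ∑ k, P k l = 1 := fun l => by
    have := hTP (single l l 1)
    rwa [Matrix.trace_single_eq_same] at this
  have hPx : P *ᵥ x = (lam : ℂ) • x := by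
    have hd : diagonal x = ∑ l, x l • (single l l 1 : Matrix (Fin d) (Fin d) ℂ) := by
      rw [← Matrix.sum_single_eq_diagonal]
      simp
    ext k
    have h := congrFun (congrFun hΦ k) k
    rw [Matrix.smul_apply, diagonal_apply_eq, hd, map_sum] at h
    simp only [Matrix.sum_apply, map_smul, Matrix.smul_apply, smul_eq_mul] at h
    simp only [Matrix.mulVec, dotProduct, P, Matrix.of_apply, Pi.smul_apply, smul_eq_mul]
    rw [← h]
    exact Finset.sum_congr rfl fun l _ => mul_comm _ _
  have hlam : (lam : ℂ) ∈ spectrum ℂ P := by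
    rw [← Matrix.spectrum_toLin', ← Module.End.hasEigenvalue_iff_mem_spectrum]
    exact Module.End.hasEigenvalue_of_hasEigenvector (x := x)
      ⟨Module.End.mem_eigenspace_iff.2 (by rw [Matrix.toLin'_apply, hPx]), hx⟩
  have ht := re_trace_le_of_stochastic P h0 h1 lam hlam
  have e : P.trace.re = ∑ k, (Φ (single k k 1) k k).re := by
    rw [Matrix.trace, Complex.re_sum]; rfl
  rw [e] at ht
  exact (re_trace_le_diag Φ h2).trans (mul_le_mul_of_nonneg_left ht (Nat.cast_nonneg d))

lemma IsTwoPos.map_conjTranspose {d : ℕ}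
    {Φ : Matrix (Fin d) (Fin d) ℂ → Matrix (Fin d) (Fin d) ℂ}
    (h2 : IsTwoPos Φ) (B : Matrix (Fin d) (Fin d) ℂ) : Φ Bᴴ = (Φ B)ᴴ := by
  -- The matrix `[[B Bᴴ, B], [Bᴴ, 1]]` is the product of `[B; 1]` with its adjoint.
  have h : (fromBlocks (B * Bᴴ) B Bᴴ 1).PosSemidef := by
    have h := posSemidef_self_mul_conjTranspose (fromRows B (1 : Matrix (Fin d) (Fin d) ℂ))
    rwa [conjTranspose_fromRows_eq_fromCols_conjTranspose, fromRows_mul_fromCols,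
      conjTranspose_one, Matrix.mul_one, Matrix.one_mul, Matrix.mul_one] at h
  have h4 := (h2 _ _ _ _ h).1
  rw [Matrix.isHermitian_fromBlocks_iff] at h4
  exact h4.2.1.symm

/-- The bound when the eigenvector is Hermitian, by passing to an eigenbasis of it. -/
lemma re_trace_le_of_isHermitian {d : ℕ} (Φ : Module.End ℂ (Matrix (Fin d) (Fin d) ℂ))
    (h2 : IsTwoPos ⇑Φ) (hTP : IsTracePreserving ⇑Φ) (lam : ℝ)
    (X : Matrix (Fin d) (Fin d) ℂ) (hX : X.IsHermitian) (hX0 : X ≠ 0)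
    (hΦ : Φ X = (lam : ℂ) • X) :
    (LinearMap.trace ℂ (Matrix (Fin d) (Fin d) ℂ) Φ).re ≤ d * (lam + (d - 1)) := by
  let U : Matrix (Fin d) (Fin d) ℂ := hX.eigenvectorUnitary
  let e : Matrix (Fin d) (Fin d) ℂ ≃ₗ[ℂ] Matrix (Fin d) (Fin d) ℂ :=
    (Unitary.conjStarAlgAut ℂ _ hX.eigenvectorUnitary).symm.toAlgEquiv.toLinearEquiv
  have he : ∀ Y, e Y = Uᴴ * Y * U := fun Y =>
    Unitary.conjStarAlgAut_symm_apply (S := ℂ) hX.eigenvectorUnitary Y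
  have hes : ∀ Y, e.symm Y = U * Y * Uᴴ := fun Y =>
    Unitary.conjStarAlgAut_apply (S := ℂ) hX.eigenvectorUnitary Y
  have hUU : U * Uᴴ = 1 := Unitary.coe_mul_star_self hX.eigenvectorUnitary
  have hUsU : Uᴴ * U = 1 := Unitary.coe_star_mul_self hX.eigenvectorUnitary
  have hspec : e.symm (diagonal (RCLike.ofReal ∘ hX.eigenvalues)) = X :=
    hX.spectral_theorem.symm
  have hc : ∀ Y, e.conj Φ Y = e (Φ (e.symm Y)) := fun Y => LinearEquiv.conj_apply_apply e Φ Y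
  rw [← LinearMap.trace_conj' Φ e]
  refine re_trace_le_of_diagonal (e.conj Φ) ?_ ?_ lam (RCLike.ofReal ∘ hX.eigenvalues) ?_ ?_
  · intro A B C D h
    have h4 := h.mul_mul_conjTranspose_same (fromBlocks U 0 0 U)
    simp only [fromBlocks_conjTranspose, fromBlocks_multiply, conjTranspose_zero,
      Matrix.zero_mul, Matrix.mul_zero, add_zero, zero_add] at h4
    have h3 := (h2 _ _ _ _ h4).conjTranspose_mul_mul_same (fromBlocks U 0 0 U)
    simp only [fromBlocks_conjTranspose, fromBlocks_multiply, conjTranspose_zero,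
      Matrix.zero_mul, Matrix.mul_zero, add_zero, zero_add] at h3
    simpa only [hc, he, hes] using h3
  · intro Y
    rw [hc, he, Matrix.trace_mul_cycle, hUU, Matrix.one_mul, hTP, hes, Matrix.trace_mul_cycle,
      hUsU, Matrix.one_mul]
  · intro h0
    apply hX0
    rw [← hspec, h0]
    simp
  · rw [hc, hspec, hΦ, map_smul, (e.symm_apply_eq.1 hspec).symm]

/-- If the eigenvalue of a 2-positive trace-preserving Φ with smallest real part is itself a
real number λ, then tr(Φ) ≤ d·λ + (d² − d). -/
theorem trace_le_of_real_minimal_eigenvalue (d : ℕ) (hd : 1 ≤ d)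
    (Φ : Module.End ℂ (Matrix (Fin d) (Fin d) ℂ))
    (h2 : IsTwoPos ⇑Φ) (hTP : IsTracePreserving ⇑Φ)
    (lam : ℝ) (hmem : (lam : ℂ) ∈ spectrum ℂ Φ)
    (hmin : lam = sInf (Complex.re '' spectrum ℂ Φ)) :
    (LinearMap.trace ℂ (Matrix (Fin d) (Fin d) ℂ) Φ).re ≤
      d * lam + ((d : ℝ) ^ 2 - d) := by
  rw [← Module.End.hasEigenvalue_iff_mem_spectrum] at hmem
  obtain ⟨X, hX, hX0⟩ := hmem.exists_hasEigenvector
  rw [Module.End.mem_eigenspace_iff] at hX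
  have hXs : Φ Xᴴ = (lam : ℂ) • Xᴴ := by
    rw [h2.map_conjTranspose, hX, conjTranspose_smul]
    simp
  have key : ∃ Y : Matrix (Fin d) (Fin d) ℂ, Y.IsHermitian ∧ Y ≠ 0 ∧ Φ Y = (lam : ℂ) • Y := by
    by_cases h : X + Xᴴ = 0
    · -- `X` is skew-Hermitian, so `i X` is Hermitian.
      refine ⟨Complex.I • X, ?_, smul_ne_zero Complex.I_ne_zero hX0, ?_⟩
      · rw [Matrix.IsHermitian, conjTranspose_smul, eq_neg_of_add_eq_zero_right h]
        simp
      · rw [map_smul, hX, smul_comm]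
    · exact ⟨X + Xᴴ, isHermitian_add_transpose_self X, h, by rw [map_add, hX, hXs, smul_add]⟩
  obtain ⟨Y, hY, hY0, hΦ⟩ := key
  have := re_trace_le_of_isHermitian Φ h2 hTP lam Y hY hY0 hΦ
  linarith
end

section
/- Let d ≥ 1 and let Φ : ℂ^{d×d} → ℂ^{d×d} be a 2-positive, trace-preserving linear map for which there exists a positive definite ω ∈ ℂ^{d×d} with Φ(ω) = ω. Then tr(Φ) ≤ d·min Re σ(Φ) + (d² − d). -/
/-! Every spectral value `μ` of `Φ` satisfies `Re tr Φ ≤ d · Re μ + (d² - d)`, and the spectrum is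
nonempty, so the bound passes to the infimum of the real parts.

**Signed Kraus form.** A 2-positive map has a Hermitian Choi matrix, so diagonalizing it gives
`Φ A = ∑ ε k • K k A (K k)ᴴ` with real weights `ε k`, possibly negative (`exists_kraus`).
Then `tr Φ = ∑ ε k |tr K k|²`, trace preservation reads `∑ ε k (K k)ᴴ K k = 1`, and 2-positivity says
that `∑ ε k |f (K k)|² ≥ 0` for every functional `f` of the form
`f K = ⟨x₁, K y₁⟩ + ⟨x₂, K y₂⟩` (`BlockPos`).

**Norming an eigenfunctional.** Let `Y ≠ 0` represent an eigenfunctional,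
`tr (Y Φ ρ) = μ tr (Y ρ)`. Choose a unit vector `v` maximizing the variance `‖Y v‖² - |⟨v, Y v⟩|²`,
and put `α = ⟨v, Y v⟩`. Then `‖Y - α‖` is attained at `v` (`exists_max_variance`), so
`Y = α + m X` with `X` a contraction, `u = X v` a unit vector orthogonal to `v`, and `Xᴴ u = v`.
If `m = 0`, trace preservation forces `μ = 1`, and `tr Φ ≤ d²` suffices (`trace_bound_sq`).
If `m ≠ 0`, the matrix `v u†` is traceless, so the scalar part drops out and `tr (X Φ (v u†)) = μ`.

**The trace bound.** It remains to show `Re tr Φ ≤ d · Re tr (X Φ (v u†)) + (d² - d)`. In an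
orthonormal basis with `e a = u` and `e b = v` (`core`), put `F k = K k e_a + X K k e_b`, whose
`a`-th entry is `s = (K k) a a + (K k) b b`. A Lagrange identity (`lagrange`) expresses `|tr K k|²` by
`|s|²`, the `|(K k) j j|²`, and differences of these diagonal terms. The differences among the
`(K k) j j` have nonnegative weighted square sums. The differences `s - 2 (K k) j j` are completed to
functionals covered by `BlockPos`, and averaging over the fourth roots of unity (`phases`) removes the
cross terms. What remains is controlled by `∑ ε k ‖F k‖² ≤ 2 + 2 Re tr (X Φ (v u†))`, which is where
contractivity of `X` is used, and by the column identities coming from trace preservation. -/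

open Matrix
open scoped ComplexOrder

/-! ### A unit vector of maximal variance -/

open scoped InnerProductSpace in
/-- A unit vector `v` of maximal variance `‖S v‖² - |⟨v, S v⟩|²` norms `S - α`, where
`α = ⟨v, S v⟩`; the variance is unchanged when a scalar is subtracted from `S`. Writing `T = S - α`,
first-order optimality gives `T v ⟂ T z` for `z ⟂ v`, and comparison with suitable `v + e c z`
(`e` real, `|c| = 1`) gives `‖T z‖ ≤ ‖T v‖ ‖z‖` there. -/
theorem exists_max_variance {E : Type*} [NormedAddCommGroup E] [InnerProductSpace ℂ E]
    [FiniteDimensional ℂ E] [Nontrivial E] (S : E →ₗ[ℂ] E) :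
    ∃ (α : ℂ) (v : E), ‖v‖ = 1 ∧ ⟪v, S v - α • v⟫_ℂ = 0 ∧
      ∀ z, ‖S z - α • z‖ ≤ ‖S v - α • v‖ * ‖z‖ := by
  have hcont : Continuous S := S.continuous_of_finiteDimensional
  have : ProperSpace E := FiniteDimensional.proper ℂ E
  obtain ⟨v, hv, hmax⟩ := (isCompact_sphere (0 : E) 1).exists_isMaxOn
    (NormedSpace.sphere_nonempty.mpr zero_le_one)
    (f := fun w => ‖S w‖ ^ 2 - ‖⟪w, S w⟫_ℂ‖ ^ 2) (by fun_prop)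
  have hv1 : ‖v‖ = 1 := by simpa using hv
  set α : ℂ := ⟪v, S v⟫_ℂ with hα
  set T : E →ₗ[ℂ] E := S - α • LinearMap.id with hT
  have hTv : ∀ z, S z - α • z = T z := fun z => by simp [hT]
  have hvv : ⟪v, v⟫_ℂ = 1 := by rw [inner_self_eq_norm_sq_to_K, hv1]; simp
  have hv0 : ⟪v, T v⟫_ℂ = 0 := by
    rw [← hTv, inner_sub_right, inner_smul_right, hvv]; simp [hα]
  refine ⟨α, v, hv1, by rw [hTv]; exact hv0, ?_⟩
  simp only [hTv]
  set m := ‖T v‖ with hm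
  -- the variance is invariant under subtracting a scalar
  have hshift : ∀ w : E, ‖w‖ = 1 → ‖S w‖ ^ 2 - ‖⟪w, S w⟫_ℂ‖ ^ 2 = ‖T w‖ ^ 2 - ‖⟪w, T w⟫_ℂ‖ ^ 2 := by
    intro w hw
    have hS : S w = T w + α • w := by rw [← hTv]; abel
    have hww : ⟪w, w⟫_ℂ = 1 := by rw [inner_self_eq_norm_sq_to_K, hw]; simp
    rw [hS, inner_add_right, inner_smul_right, hww, mul_one, norm_add_sq (𝕜 := ℂ), norm_smul, hw,
      inner_smul_right, ← inner_conj_symm (T w) w, ← Complex.normSq_eq_norm_sq,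
      ← Complex.normSq_eq_norm_sq ⟪w, T w⟫_ℂ, Complex.normSq_add, mul_one, Complex.normSq_eq_norm_sq α]
    have : RCLike.re (α * (starRingEnd ℂ) ⟪w, T w⟫_ℂ) = (⟪w, T w⟫_ℂ * (starRingEnd ℂ) α).re := by
      simp only [RCLike.re_to_complex, Complex.mul_re, Complex.conj_re, Complex.conj_im]; ring
    rw [this]; ring
  have hmax1 : ∀ w : E, ‖w‖ = 1 → ‖T w‖ ^ 2 - ‖⟪w, T w⟫_ℂ‖ ^ 2 ≤ m ^ 2 := by
    intro w hw
    have := hmax (show w ∈ Metric.sphere (0 : E) 1 by simpa using hw)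
    simp only [Set.mem_ofPred_eq] at this
    rw [hshift w hw, hshift v hv1, hv0] at this
    simpa using this
  have hmax2 : ∀ w : E, ‖w‖ ^ 2 * ‖T w‖ ^ 2 - ‖⟪w, T w⟫_ℂ‖ ^ 2 ≤ m ^ 2 * (‖w‖ ^ 2) ^ 2 := by
    intro w
    rcases eq_or_ne w 0 with rfl | hw
    · simp
    have hw' : 0 < ‖w‖ := norm_pos_iff.mpr hw
    have h1 := hmax1 (((‖w‖⁻¹ : ℝ) : ℂ) • w) (by
      rw [norm_smul]; simp [hw'.ne'])
    rw [map_smul, inner_smul_left, inner_smul_right, norm_smul, norm_mul, norm_mul] at h1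
    simp only [Complex.conj_ofReal, Complex.norm_real, norm_inv, norm_norm] at h1
    have h2 := mul_le_mul_of_nonneg_right h1 (by positivity : 0 ≤ (‖w‖ ^ 2) ^ 2)
    have : ((‖w‖⁻¹ * ‖T w‖) ^ 2 - (‖w‖⁻¹ * (‖w‖⁻¹ * ‖⟪w, T w⟫_ℂ‖)) ^ 2) * (‖w‖ ^ 2) ^ 2
        = ‖w‖ ^ 2 * ‖T w‖ ^ 2 - ‖⟪w, T w⟫_ℂ‖ ^ 2 := by
      field_simp
    rwa [this] at h2
  -- the maximality inequality along the real line `v + e z` with `z ⟂ v`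
  have hline : ∀ z : E, ⟪v, z⟫_ℂ = 0 → ∀ e : ℝ,
      (1 + e ^ 2 * ‖z‖ ^ 2) * (m ^ 2 + 2 * e * (⟪T v, T z⟫_ℂ).re + e ^ 2 * ‖T z‖ ^ 2)
        - e ^ 2 * ‖⟪z, T v⟫_ℂ + ⟪v, T z⟫_ℂ + e * ⟪z, T z⟫_ℂ‖ ^ 2
      ≤ m ^ 2 * (1 + e ^ 2 * ‖z‖ ^ 2) ^ 2 := by
    intro z hz e
    have h1 := hmax2 (v + (e : ℂ) • z)
    have n1 : ‖v + (e : ℂ) • z‖ ^ 2 = 1 + e ^ 2 * ‖z‖ ^ 2 := by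
      rw [norm_add_sq (𝕜 := ℂ), inner_smul_right, hz, hv1, norm_smul]
      simp [mul_pow]
    have n2 : ‖T (v + (e : ℂ) • z)‖ ^ 2 = m ^ 2 + 2 * e * (⟪T v, T z⟫_ℂ).re + e ^ 2 * ‖T z‖ ^ 2 := by
      rw [map_add, map_smul, norm_add_sq (𝕜 := ℂ), inner_smul_right, norm_smul]
      simp [mul_pow, hm]
      ring
    have n3 : ⟪v + (e : ℂ) • z, T (v + (e : ℂ) • z)⟫_ℂ
        = e * (⟪z, T v⟫_ℂ + ⟪v, T z⟫_ℂ + e * ⟪z, T z⟫_ℂ) := by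
      rw [map_add, map_smul, inner_add_left, inner_add_right, inner_add_right, hv0]
      simp only [inner_smul_left, inner_smul_right, Complex.conj_ofReal]
      ring
    rw [n1, n2, n3, norm_mul, mul_pow] at h1
    simpa using h1
  have hre_le : ∀ z : E, ⟪v, z⟫_ℂ = 0 → (⟪T v, T z⟫_ℂ).re ≤ 0 := by
    intro z hz
    by_contra! hr
    set r := (⟪T v, T z⟫_ℂ).re
    set C := (‖⟪z, T v⟫_ℂ + ⟪v, T z⟫_ℂ‖ + ‖⟪z, T z⟫_ℂ‖) ^ 2 + m ^ 2 * ‖z‖ ^ 2 + m ^ 2 * ‖z‖ ^ 4 + 1 with hC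
    have hCpos : 0 < C := by positivity
    set e := min 1 (r / C) with he
    have he0 : 0 < e := lt_min one_pos (div_pos hr hCpos)
    have he1 : e ≤ 1 := min_le_left _ _
    have her : e * C ≤ r := by
      have := min_le_right 1 (r / C)
      rwa [← he, le_div_iff₀ hCpos] at this
    have hl := hline z hz e
    have hb : ‖⟪z, T v⟫_ℂ + ⟪v, T z⟫_ℂ + e * ⟪z, T z⟫_ℂ‖ ^ 2
        ≤ (‖⟪z, T v⟫_ℂ + ⟪v, T z⟫_ℂ‖ + ‖⟪z, T z⟫_ℂ‖) ^ 2 := by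
      gcongr
      refine (norm_add_le _ _).trans ?_
      gcongr
      rw [norm_mul, Complex.norm_real, Real.norm_of_nonneg he0.le]
      exact mul_le_of_le_one_left (norm_nonneg _) he1
    set B := ‖⟪z, T v⟫_ℂ + ⟪v, T z⟫_ℂ + e * ⟪z, T z⟫_ℂ‖ ^ 2
    have hB : B + m ^ 2 * ‖z‖ ^ 2 + m ^ 2 * ‖z‖ ^ 4 + 1 ≤ C := by rw [hC]; linarith
    have h1 : 2 * e * r ≤ e ^ 2 * (B + m ^ 2 * ‖z‖ ^ 2 + m ^ 2 * ‖z‖ ^ 4) := by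
      have a1 : 0 ≤ e ^ 2 * ‖z‖ ^ 2 * (2 * e * r) := by positivity
      have a2 : 0 ≤ (1 + e ^ 2 * ‖z‖ ^ 2) * (e ^ 2 * ‖T z‖ ^ 2) := by positivity
      have a3 : e ^ 4 * (m ^ 2 * ‖z‖ ^ 4) ≤ e ^ 2 * (m ^ 2 * ‖z‖ ^ 4) := by
        gcongr ?_ * _
        exact pow_le_pow_of_le_one he0.le he1 (by norm_num)
      nlinarith
    have h2 : 2 * r ≤ e * (B + m ^ 2 * ‖z‖ ^ 2 + m ^ 2 * ‖z‖ ^ 4) := by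
      have : e * (2 * r) ≤ e * (e * (B + m ^ 2 * ‖z‖ ^ 2 + m ^ 2 * ‖z‖ ^ 4)) := by
        linarith
      exact le_of_mul_le_mul_left this he0
    have h3 : e * (B + m ^ 2 * ‖z‖ ^ 2 + m ^ 2 * ‖z‖ ^ 4) ≤ e * C := by
      gcongr; linarith
    linarith
  have hre : ∀ z : E, ⟪v, z⟫_ℂ = 0 → (⟪T v, T z⟫_ℂ).re = 0 := by
    intro z hz
    refine le_antisymm (hre_le z hz) ?_
    have := hre_le (-z) (by simp [hz])
    simpa using this
  have horth : ∀ z : E, ⟪v, z⟫_ℂ = 0 → ⟪T v, T z⟫_ℂ = 0 := by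
    intro z hz
    refine Complex.ext (hre z hz) ?_
    have := hre (Complex.I • z) (by rw [inner_smul_right, hz, mul_zero])
    rw [map_smul, inner_smul_right] at this
    simpa using this
  -- contractivity on the orthogonal complement of `v`
  have hperp1 : ∀ z : E, ⟪v, z⟫_ℂ = 0 → ‖z‖ = 1 → ‖T z‖ ^ 2 ≤ m ^ 2 := by
    intro z hz hz1
    by_cases hk : ⟪z, T z⟫_ℂ = 0
    · have := hmax1 z hz1
      simpa [hk] using this
    set k := ⟪z, T z⟫_ℂ
    set p := ⟪z, T v⟫_ℂ / k with hp
    set q := ⟪v, T z⟫_ℂ / k with hq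
    -- a phase `c` and a real `e` for which `⟪w, T w⟫` vanishes at `w = v + (e * c) • z`
    obtain ⟨c, hc1, hc⟩ : ∃ c : ℂ, ‖c‖ = 1 ∧ (c * (q - (starRingEnd ℂ) p)).im = 0 := by
      by_cases h0 : q - (starRingEnd ℂ) p = 0
      · exact ⟨1, by simp, by simp [h0]⟩
      · have hn : ‖q - (starRingEnd ℂ) p‖ ≠ 0 := norm_ne_zero_iff.mpr h0
        refine ⟨(starRingEnd ℂ) (q - (starRingEnd ℂ) p) / ‖q - (starRingEnd ℂ) p‖, ?_, ?_⟩
        · rw [norm_div, RCLike.norm_conj, Complex.norm_real, norm_norm, div_self hn]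
        · rw [div_mul_eq_mul_div, ← Complex.normSq_eq_conj_mul_self, ← Complex.ofReal_div,
            Complex.ofReal_im]
    set e : ℝ := -((starRingEnd ℂ) c * p + c * q).re with he
    have hcc : (starRingEnd ℂ) c * c = 1 := by
      rw [← Complex.normSq_eq_conj_mul_self, Complex.normSq_eq_norm_sq, hc1]; simp
    have hreal : (starRingEnd ℂ) c * p + c * q + e = 0 := by
      apply Complex.ext
      · simp only [he, Complex.add_re, Complex.ofReal_re, Complex.zero_re]; ring
      · simp at hc ⊢
        linarith
    have hl : ∀ t : ℝ, t ^ 2 * ((1 + t ^ 2) * (‖T z‖ ^ 2 - m ^ 2))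
        ≤ t ^ 2 * ((t - e) ^ 2 * ‖k‖ ^ 2) := by
      intro t
      have hl := hline (c • z) (by rw [inner_smul_right, hz, mul_zero]) t
      have hz0 : ⟪c • z, T v⟫_ℂ + ⟪v, T (c • z)⟫_ℂ + t * ⟪c • z, T (c • z)⟫_ℂ
          = ((t - e : ℝ) : ℂ) * k := by
        rw [map_smul, inner_smul_left, inner_smul_right, inner_smul_left, inner_smul_right]
        have e1 : ⟪z, T v⟫_ℂ = p * k := by rw [hp, div_mul_cancel₀ _ hk]
        have e2 : ⟪v, T z⟫_ℂ = q * k := by rw [hq, div_mul_cancel₀ _ hk]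
        rw [e1, e2]
        change _ + _ + t * (_ * (c * k)) = _
        push_cast
        linear_combination k * hreal + t * k * hcc
      rw [hz0, map_smul, inner_smul_right, horth z hz, norm_smul, norm_smul, hc1, hz1, norm_mul,
        Complex.norm_real, Real.norm_eq_abs, mul_pow |t - e|, sq_abs] at hl
      simp only [mul_zero, Complex.zero_re, one_mul, mul_one, one_pow, add_zero] at hl
      nlinarith
    by_cases he0 : e = 0
    · -- the quotient inequality at `t = 0` is a limit of those at small `t`
      refine le_of_forall_pos_le_add fun δ hδ => ?_
      have hkn : 0 < ‖k‖ ^ 2 := by positivity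
      have hpos : 0 < δ / ‖k‖ ^ 2 := div_pos hδ hkn
      have h1 := hl (Real.sqrt (δ / ‖k‖ ^ 2))
      rw [he0, sub_zero, Real.sq_sqrt hpos.le] at h1
      have h2 := le_of_mul_le_mul_left h1 hpos
      rw [div_mul_cancel₀ _ hkn.ne'] at h2
      by_contra! h3
      have h4 : 0 ≤ δ / ‖k‖ ^ 2 * (‖T z‖ ^ 2 - m ^ 2) := mul_nonneg hpos.le (by linarith)
      linarith
    · have h1 := le_of_mul_le_mul_left (hl e) (by positivity : 0 < e ^ 2)
      rw [sub_self] at h1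
      have h2 : 0 < 1 + e ^ 2 := by positivity
      by_contra! h3
      have := mul_pos h2 (sub_pos.mpr h3)
      linarith
  have hperp : ∀ z : E, ⟪v, z⟫_ℂ = 0 → ‖T z‖ ≤ m * ‖z‖ := by
    intro z hz
    rcases eq_or_ne z 0 with rfl | h0
    · simp
    have hz' : 0 < ‖z‖ := norm_pos_iff.mpr h0
    have := hperp1 (((‖z‖⁻¹ : ℝ) : ℂ) • z) (by rw [inner_smul_right, hz, mul_zero])
      (by rw [norm_smul]; simp [hz'.ne'])
    have := abs_le_of_sq_le_sq this (norm_nonneg _)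
    rw [map_smul, norm_smul, abs_of_nonneg (by positivity)] at this
    simp at this
    rwa [inv_mul_le_iff₀ hz', mul_comm] at this
  intro z
  set c := ⟪v, z⟫_ℂ with hc
  set y := z - c • v with hy
  have hzy : z = c • v + y := by rw [hy]; abel
  have hvy : ⟪v, y⟫_ℂ = 0 := by
    rw [hy, inner_sub_right, inner_smul_right, hvv]; simp [hc]
  have h1 : ‖z‖ ^ 2 = ‖c‖ ^ 2 + ‖y‖ ^ 2 := by
    rw [hzy, norm_add_sq (𝕜 := ℂ), inner_smul_left, hvy, norm_smul, hv1]; simp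
  have h2 : ‖T z‖ ^ 2 = ‖c‖ ^ 2 * m ^ 2 + ‖T y‖ ^ 2 := by
    rw [hzy, map_add, map_smul, norm_add_sq (𝕜 := ℂ), inner_smul_left, horth y hvy, norm_smul]
    simp [mul_pow, hm]
  have h3 := hperp y hvy
  refine le_of_sq_le_sq ?_ (by positivity)
  rw [h2, mul_pow, h1]
  have h4 : ‖T y‖ ^ 2 ≤ (m * ‖y‖) ^ 2 := by gcongr
  nlinarith

/-! ### Signed Kraus families -/

/-- The form 2-positivity takes for a signed Kraus family: functionals `K ↦ ⟨x₁, K y₁⟩ + ⟨x₂, K y₂⟩`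
have nonnegative weighted square sums. -/
def BlockPos {d : ℕ} {ι : Type*} [Fintype ι] (ε : ι → ℝ) (K : ι → Matrix (Fin d) (Fin d) ℂ) : Prop :=
  ∀ x₁ y₁ x₂ y₂ : Fin d → ℂ,
    0 ≤ ∑ k, ε k * Complex.normSq (star x₁ ⬝ᵥ K k *ᵥ y₁ + star x₂ ⬝ᵥ K k *ᵥ y₂)

section

variable {d : ℕ} {ι : Type*} [Fintype ι]

/-- `Φ A = ∑ ε k • K k A (K k)ᴴ`: a Kraus representation with real weights, which may be negative. -/
def IsKraus (Φ : Module.End ℂ (Matrix (Fin d) (Fin d) ℂ)) (ε : ι → ℝ)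
    (K : ι → Matrix (Fin d) (Fin d) ℂ) : Prop :=
  ∀ A, Φ A = ∑ k, (ε k : ℂ) • (K k * A * (K k)ᴴ)

/-- 2-positivity applied to the rank-one block matrix of the stacked vector `(y, z)`. -/
theorem IsTwoPos.vecMulVec {Φ : Matrix (Fin d) (Fin d) ℂ → Matrix (Fin d) (Fin d) ℂ}
    (h2 : IsTwoPos Φ) (y z : Fin d → ℂ) :
    (fromBlocks (Φ (vecMulVec y (star y))) (Φ (vecMulVec y (star z)))
      (Φ (vecMulVec z (star y))) (Φ (vecMulVec z (star z)))).PosSemidef := by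
  apply h2
  convert posSemidef_vecMulVec_self_star (Sum.elim y z) using 1
  ext i j
  rcases i with i | i <;> rcases j with j | j <;> simp [Matrix.vecMulVec_apply]

/-- The spectral decomposition of the Choi matrix, whose Hermiticity is the off-diagonal part of
`IsTwoPos.vecMulVec` at standard basis vectors. -/
theorem exists_kraus {Φ : Module.End ℂ (Matrix (Fin d) (Fin d) ℂ)} (h2 : IsTwoPos ⇑Φ) :
    ∃ (ε : Fin d × Fin d → ℝ) (K : Fin d × Fin d → Matrix (Fin d) (Fin d) ℂ), IsKraus Φ ε K := by
  have hherm : ∀ j l i k, star (Φ (single j l 1) i k) = Φ (single l j 1) k i := by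
    intro j l i k
    have h := (h2.vecMulVec (Pi.single j 1) (Pi.single l 1)).isHermitian
    rw [isHermitian_fromBlocks_iff] at h
    have hki := congrFun (congrFun h.2.1 k) i
    have e : ∀ j l : Fin d, vecMulVec (Pi.single j 1) (star (Pi.single l 1)) = single j l (1 : ℂ) := by
      intro j l
      rw [← Pi.single_star, star_one, single_eq_single_vecMulVec_single]
    rw [e, e] at hki
    exact hki
  -- the Choi matrix
  set C : Matrix (Fin d × Fin d) (Fin d × Fin d) ℂ :=
    of fun p q => Φ (single p.2 q.2 1) p.1 q.1 with hC
  have hCH : C.IsHermitian := by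
    ext p q
    exact hherm _ _ _ _
  refine ⟨hCH.eigenvalues, fun m => of fun i j =>
    (hCH.eigenvectorUnitary : Matrix (Fin d × Fin d) (Fin d × Fin d) ℂ) (i, j) m, fun A => ?_⟩
  have hspec : ∀ i j k l, Φ (single j l 1) i k = ∑ m, (hCH.eigenvalues m : ℂ) *
      ((hCH.eigenvectorUnitary : Matrix (Fin d × Fin d) (Fin d × Fin d) ℂ) (i, j) m *
      star ((hCH.eigenvectorUnitary : Matrix (Fin d × Fin d) (Fin d × Fin d) ℂ) (k, l) m)) := by
    intro i j k l
    have := congrFun (congrFun hCH.spectral_theorem (i, j)) (k, l)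
    change Φ (single j l 1) i k = _ at this
    rw [Unitary.conjStarAlgAut_apply, mul_apply] at this
    rw [this]
    refine Finset.sum_congr rfl fun m _ => ?_
    rw [mul_diagonal, star_apply]
    simp
    ring
  ext i k
  conv_lhs => rw [matrix_eq_sum_single A]
  simp only [map_sum, Matrix.sum_apply]
  have e : ∀ j l, Φ (single j l (A j l)) i k = A j l * Φ (single j l 1) i k := by
    intro j l
    have : single j l (A j l) = A j l • single j l (1 : ℂ) := by simp
    rw [this, map_smul]; rfl
  simp only [e, hspec, Finset.mul_sum, Matrix.smul_apply, mul_apply, Finset.sum_mul, conjTranspose_apply,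
    of_apply, smul_eq_mul]
  rw [Finset.sum_comm_cycle]
  refine Finset.sum_congr rfl fun m _ => ?_
  rw [Finset.sum_comm]
  refine Finset.sum_congr rfl fun l _ => Finset.sum_congr rfl fun j _ => ?_
  ring

theorem star_dotProduct_vecMulVec (K : Matrix (Fin d) (Fin d) ℂ) (x x' y y' : Fin d → ℂ) :
    star x ⬝ᵥ (K * vecMulVec y (star y') * Kᴴ) *ᵥ x'
      = (star x ⬝ᵥ K *ᵥ y) * star (star x' ⬝ᵥ K *ᵥ y') := by
  rw [mul_vecMulVec, vecMulVec_mul, ← star_mulVec, vecMulVec_mulVec, dotProduct_smul, star_dotProduct x',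
    star_star, op_smul_eq_mul]

/-- The quadratic form of the block matrix in `IsTwoPos.vecMulVec`, evaluated at `(x₁, x₂)`. -/
theorem IsKraus.blockPos {Φ : Module.End ℂ (Matrix (Fin d) (Fin d) ℂ)} {ε : ι → ℝ}
    {K : ι → Matrix (Fin d) (Fin d) ℂ} (hK : IsKraus Φ ε K) (h2 : IsTwoPos ⇑Φ) : BlockPos ε K := by
  intro x₁ y₁ x₂ y₂
  have h := (h2.vecMulVec y₁ y₂).dotProduct_mulVec_nonneg (Sum.elim x₁ x₂)
  have e : ∀ x x' y y', star x ⬝ᵥ Φ (vecMulVec y (star y')) *ᵥ x' = 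
      ∑ k, (ε k : ℂ) * ((star x ⬝ᵥ K k *ᵥ y) * star (star x' ⬝ᵥ K k *ᵥ y')) := by
    intro x x' y y'
    rw [hK, sum_mulVec, dotProduct_sum]
    refine Finset.sum_congr rfl fun k _ => ?_
    rw [smul_mulVec, dotProduct_smul, star_dotProduct_vecMulVec, smul_eq_mul]
  rw [fromBlocks_mulVec, Function.star_sumElim, sumElim_dotProduct_sumElim] at h
  simp only [Sum.elim_comp_inl, Sum.elim_comp_inr, dotProduct_add, e, ← Finset.sum_add_distrib] at h
  rw [← Complex.zero_le_real]
  refine h.trans_eq ?_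
  push_cast
  refine Finset.sum_congr rfl fun k _ => ?_
  rw [Complex.normSq_eq_conj_mul_self]
  simp only [map_add, ← Complex.star_def]
  ring

theorem IsKraus.sum_conjTranspose_mul {Φ : Module.End ℂ (Matrix (Fin d) (Fin d) ℂ)} {ε : ι → ℝ}
    {K : ι → Matrix (Fin d) (Fin d) ℂ} (hK : IsKraus Φ ε K) (hTP : IsTracePreserving ⇑Φ) :
    ∑ k, (ε k : ℂ) • ((K k)ᴴ * K k) = 1 := by
  rw [Matrix.ext_iff_trace_mul_right]
  intro A
  rw [one_mul, ← hTP A, hK, trace_sum, Finset.sum_mul, trace_sum]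
  refine Finset.sum_congr rfl fun k _ => ?_
  rw [smul_mul, trace_smul, trace_smul, Matrix.mul_assoc, Matrix.trace_mul_comm]

/-- The trace of `Φ` is the sum of the entries `Φ (E i j) i j`, where `E i j` are the matrix units. -/
theorem IsKraus.trace {Φ : Module.End ℂ (Matrix (Fin d) (Fin d) ℂ)} {ε : ι → ℝ}
    {K : ι → Matrix (Fin d) (Fin d) ℂ} (hK : IsKraus Φ ε K) :
    (LinearMap.trace ℂ (Matrix (Fin d) (Fin d) ℂ) Φ).re = ∑ k, ε k * Complex.normSq (K k).trace := by
  have : LinearMap.trace ℂ (Matrix (Fin d) (Fin d) ℂ) Φ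
      = ((∑ k, ε k * Complex.normSq (K k).trace : ℝ) : ℂ) := by
    rw [LinearMap.trace_eq_matrix_trace ℂ (Matrix.stdBasis ℂ (Fin d) (Fin d)), Matrix.trace,
      Fintype.sum_prod_type]
    have e : ∀ i j, (LinearMap.toMatrix (stdBasis ℂ (Fin d) (Fin d)) (stdBasis ℂ (Fin d) (Fin d)) Φ).diag
        (i, j) = ∑ k, (ε k : ℂ) * (K k i i * star (K k j j)) := by
      intro i j
      rw [diag_apply, LinearMap.toMatrix_apply, stdBasis_eq_single, hK]
      have : ∀ M : Matrix (Fin d) (Fin d) ℂ, (stdBasis ℂ (Fin d) (Fin d)).repr M (i, j) = M i j := by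
        intro M
        conv_lhs => rw [matrix_eq_sum_single M]
        simp only [map_sum]
        have : ∀ k l, single k l (M k l) = M k l • stdBasis ℂ (Fin d) (Fin d) (k, l) := by
          intro k l; rw [stdBasis_eq_single]; simp
        simp [this, Finsupp.single_apply, Finset.sum_apply', ite_and]
      rw [this, Matrix.sum_apply]
      refine Finset.sum_congr rfl fun k _ => ?_
      have h := star_dotProduct_vecMulVec (K k) (Pi.single i 1) (Pi.single j 1) (Pi.single i 1) (Pi.single j 1)
      rw [← Pi.single_star, ← Pi.single_star, star_one, ← single_eq_single_vecMulVec_single] at h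
      simp at h
      simp [h]
    simp only [e]
    push_cast
    have : ∀ k, (Complex.normSq (K k).trace : ℂ) = ∑ i, ∑ j, K k i i * star (K k j j) := by
      intro k
      rw [← Complex.mul_conj, Matrix.trace, map_sum, Finset.sum_mul_sum]
      rfl
    simp only [this, Finset.mul_sum]
    rw [Finset.sum_comm_cycle]
  rw [this, Complex.ofReal_re]

theorem sum_normSq_col {ε : ι → ℝ} {K : ι → Matrix (Fin d) (Fin d) ℂ}
    (hK : ∑ k, (ε k : ℂ) • ((K k)ᴴ * K k) = 1) (j : Fin d) :
    ∑ k, ε k * ∑ i, Complex.normSq (K k i j) = 1 := by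
  apply Complex.ofReal_injective
  have h := congrFun (congrFun hK j) j
  rw [Matrix.sum_apply, one_apply_eq] at h
  rw [Complex.ofReal_one, ← h]
  push_cast
  refine Finset.sum_congr rfl fun k _ => ?_
  rw [Matrix.smul_apply, mul_apply, smul_eq_mul]
  congr 1
  refine Finset.sum_congr rfl fun i _ => ?_
  rw [conjTranspose_apply, Complex.normSq_eq_conj_mul_self]
  rfl

/-! ### Trace bounds for signed Kraus families -/

theorem BlockPos.one {ε : ι → ℝ} {K : ι → Matrix (Fin d) (Fin d) ℂ} (h : BlockPos ε K)
    (x y : Fin d → ℂ) : 0 ≤ ∑ k, ε k * Complex.normSq (star x ⬝ᵥ K k *ᵥ y) := by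
  simpa using h x y 0 0

theorem BlockPos.entry {ε : ι → ℝ} {K : ι → Matrix (Fin d) (Fin d) ℂ} (h : BlockPos ε K)
    (i j : Fin d) : 0 ≤ ∑ k, ε k * Complex.normSq (K k i j) := by
  simpa [← Pi.single_star] using h.one (Pi.single i 1) (Pi.single j 1)

theorem BlockPos.diag_sub {ε : ι → ℝ} {K : ι → Matrix (Fin d) (Fin d) ℂ} (h : BlockPos ε K)
    (i j : Fin d) : 0 ≤ ∑ k, ε k * Complex.normSq (K k i i - K k j j) := by
  simpa [← Pi.single_star, sub_eq_add_neg, Matrix.mulVec_neg] using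
    h (Pi.single i 1) (Pi.single i 1) (Pi.single j 1) (-Pi.single j 1)

/-- With `D` the diagonal entries over `J` and `s` the sum of the two remaining ones, the first term is
the squared modulus of the trace. It is the Lagrange identity for a vector of `J.card + 2` entries,
two of which equal `s / 2`. -/
theorem lagrange {α : Type*} (J : Finset α) (s : ℂ) (D : α → ℂ) :
    Complex.normSq (s + ∑ j ∈ J, D j) + (∑ j ∈ J, Complex.normSq (s - 2 * D j)) / 2
      + (∑ i ∈ J, ∑ j ∈ J, Complex.normSq (D i - D j)) / 2
    = ((J.card : ℝ) + 2) / 2 * Complex.normSq s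
      + ((J.card : ℝ) + 2) * ∑ j ∈ J, Complex.normSq (D j) := by
  simp only [Complex.normSq_apply, Complex.add_re, Complex.add_im, Complex.sub_re, Complex.sub_im,
    Complex.re_sum, Complex.im_sum, Complex.mul_re, Complex.mul_im, Complex.re_ofNat,
    Complex.im_ofNat, zero_mul, sub_zero, add_zero]
  have e1 : ∀ j, (s.re - 2 * (D j).re) * (s.re - 2 * (D j).re)
      + (s.im - 2 * (D j).im) * (s.im - 2 * (D j).im)
      = (s.re * s.re + s.im * s.im) + ((-4 * s.re) * (D j).re + (-4 * s.im) * (D j).im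
        + (4 * ((D j).re * (D j).re) + 4 * ((D j).im * (D j).im))) := fun j => by ring
  have e2 : ∀ i j, ((D i).re - (D j).re) * ((D i).re - (D j).re)
      + ((D i).im - (D j).im) * ((D i).im - (D j).im)
      = ((D i).re * (D i).re + (D i).im * (D i).im) + ((D j).re * (D j).re + (D j).im * (D j).im)
        + (-2 * (D i).re * (D j).re + (-2 * (D i).im) * (D j).im) := fun i j => by ring
  simp only [e1, e2, Finset.sum_add_distrib, ← Finset.mul_sum, ← Finset.sum_mul, Finset.sum_const,
    nsmul_eq_mul]
  simp only [mul_add]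
  ring_nf
  simp only [← Finset.mul_sum]
  ring

/-- Averaging `|p + conj z * q + z * r|²` over the fourth roots of unity `z` removes the cross terms. -/
theorem phases (p q r : ℂ) :
    Complex.normSq (p + q + r) + Complex.normSq (p - q - r)
      + Complex.normSq (p + Complex.I * q - Complex.I * r)
      + Complex.normSq (p - Complex.I * q + Complex.I * r)
    = 4 * (Complex.normSq p + Complex.normSq q + Complex.normSq r) := by
  simp [Complex.normSq_apply]
  ring

/-- The bound `tr Φ ≤ d²`, in signed Kraus form. -/
theorem trace_bound_sq (ε : ι → ℝ) (K : ι → Matrix (Fin d) (Fin d) ℂ) (h : BlockPos ε K)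
    (hcol : ∀ j, ∑ k, ε k * ∑ i, Complex.normSq (K k i j) = 1) :
    ∑ k, ε k * Complex.normSq (K k).trace ≤ (d : ℝ) ^ 2 := by
  have key : ∀ A : Matrix (Fin d) (Fin d) ℂ, Complex.normSq A.trace
      = (d : ℝ) * ∑ j, Complex.normSq (A j j)
        - (∑ i, ∑ j, Complex.normSq (A i i - A j j)) / 2 := by
    intro A
    have e0 := lagrange (Finset.univ : Finset (Fin d)) 0 (fun i => A i i)
    simp only [zero_add, zero_sub, Complex.normSq_neg, map_mul, Finset.card_univ,
      Fintype.card_fin, map_zero, mul_zero, ← Finset.mul_sum] at e0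
    have e1 : Complex.normSq 2 = 4 := by simp; norm_num
    rw [e1] at e0
    simp only [Matrix.trace, Matrix.diag]
    linarith
  have h1 : ∀ j, ∑ k, ε k * Complex.normSq (K k j j) ≤ 1 := by
    intro j
    rw [← hcol j]
    simp only [Finset.mul_sum]
    rw [Finset.sum_comm]
    exact Finset.single_le_sum (f := fun i => ∑ k, ε k * Complex.normSq (K k i j))
      (fun i _ => h.entry i j) (Finset.mem_univ j)
  have h2 : 0 ≤ ∑ i, ∑ j, ∑ k, ε k * Complex.normSq (K k i i - K k j j) :=
    Finset.sum_nonneg fun i _ => Finset.sum_nonneg fun j _ => h.diag_sub i j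
  have h3 : ∑ k, ε k * Complex.normSq (K k).trace
      = (d : ℝ) * ∑ j, ∑ k, ε k * Complex.normSq (K k j j)
        - (∑ i, ∑ j, ∑ k, ε k * Complex.normSq (K k i i - K k j j)) / 2 := by
    have c1 : ∑ i, ∑ j, ∑ k, ε k * Complex.normSq (K k i i - K k j j)
        = ∑ k, ε k * ∑ i, ∑ j, Complex.normSq (K k i i - K k j j) := by
      simp only [Finset.mul_sum]
      rw [Finset.sum_comm_cycle, ]
    have c2 : ∑ j, ∑ k, ε k * Complex.normSq (K k j j)
        = ∑ k, ε k * ∑ j, Complex.normSq (K k j j) := by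
      simp only [Finset.mul_sum]
      rw [Finset.sum_comm]
    rw [c1, c2, Finset.mul_sum, Finset.sum_div, ← Finset.sum_sub_distrib]
    refine Finset.sum_congr rfl fun k _ => ?_
    rw [key]; ring
  have h4 : ∑ j : Fin d, ∑ k, ε k * Complex.normSq (K k j j) ≤ d := by
    calc _ ≤ ∑ j : Fin d, (1 : ℝ) := Finset.sum_le_sum fun j _ => h1 j
      _ = d := by simp
  have h5 : (0 : ℝ) ≤ d := Nat.cast_nonneg d
  nlinarith

open scoped MatrixOrder in
theorem exists_conjTranspose_mul_self {A : Matrix (Fin d) (Fin d) ℂ} (hA : A.PosSemidef) :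
    ∃ Y : Matrix (Fin d) (Fin d) ℂ, A = Yᴴ * Y := by
  obtain ⟨Y, hY⟩ := CStarAlgebra.nonneg_iff_eq_star_mul_self.mp hA.nonneg
  exact ⟨Y, hY⟩

/-- The trace bound in adapted coordinates: the `a`-th row of the contraction `X` is `e_b`, that is
`Xᴴ e_a = e_b`. The sum on the right is `Re tr (X Φ (e_b e_a†))`. -/
theorem core (ε : ι → ℝ) (K : ι → Matrix (Fin d) (Fin d) ℂ) (h : BlockPos ε K)
    (hcol : ∀ j, ∑ k, ε k * ∑ i, Complex.normSq (K k i j) = 1)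
    (a b : Fin d) (hab : a ≠ b) (X : Matrix (Fin d) (Fin d) ℂ)
    (hX : (1 - Xᴴ * X).PosSemidef) (hXa : X a = Pi.single b 1) :
    ∑ k, ε k * Complex.normSq (K k).trace ≤
      d * ∑ k, ε k * (star ((K k).col a) ⬝ᵥ X *ᵥ (K k).col b).re + ((d : ℝ) ^ 2 - d) := by
  set F : ι → Fin d → ℂ := fun k i => K k i a + (X *ᵥ (K k).col b) i with hF
  set J : Finset (Fin d) := (Finset.univ.erase a).erase b with hJ
  have hba : b ∈ (Finset.univ : Finset (Fin d)).erase a := by simp [hab.symm]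
  have hsum : ∀ {M : Type} [AddCommMonoid M] (g : Fin d → M), ∑ i, g i = g a + (g b + ∑ j ∈ J, g j) := by
    intro M _ g
    rw [hJ, Finset.add_sum_erase _ _ hba, Finset.add_sum_erase _ _ (Finset.mem_univ a)]
  have hcard : (J.card : ℝ) + 2 = d := by
    have := hsum (fun _ => (1 : ℕ))
    simp at this
    have := congrArg (Nat.cast (R := ℝ)) this
    push_cast at this
    linarith
  have hJa : ∀ j ∈ J, j ≠ a := fun j hj => Finset.ne_of_mem_erase (Finset.mem_of_mem_erase hj)
  have hd2 : (2 : ℝ) ≤ d := by rw [← hcard]; linarith [Nat.cast_nonneg (α := ℝ) J.card]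
  have hFa : ∀ k, F k a = K k a a + K k b b := by
    intro k
    simp [hF, Matrix.mulVec, hXa]
  have hFpos : ∀ i, 0 ≤ ∑ k, ε k * Complex.normSq (F k i) := by
    intro i
    have := h (Pi.single i 1) (Pi.single a 1) (star (X i)) (Pi.single b 1)
    simpa [← Pi.single_star, hF, Matrix.mulVec] using this
  -- two-term functionals with value `s - 2 (K k) j j + conj z * F k j - 2 z * (K k) a j`; at the fourth
  -- roots of unity `z` the cross terms average out
  have hθ : ∀ (z : ℂ), Complex.normSq z = 1 → ∀ j, 0 ≤ ∑ k, ε k * Complex.normSq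
      ((K k a a + K k b b - 2 * K k j j) + star z * F k j + z * (-2 * K k a j)) := by
    intro z hz j
    have hz' : star z * z = 1 := by
      have := Complex.normSq_eq_conj_mul_self (z := z)
      rw [hz] at this; simpa using this.symm
    have := h (Pi.single a 1 + z • Pi.single j 1) (Pi.single a 1 + (-2 * z) • Pi.single j 1)
      (Pi.single b 1 + z • star (X j)) (Pi.single b 1)
    refine this.trans_eq (Finset.sum_congr rfl fun k _ => ?_)
    congr 2
    simp [hF, Matrix.mulVec_add, add_dotProduct, Matrix.mulVec]
    simp at hz'
    linear_combination (-2 * K k j j) * hz'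
  have hstep : ∀ j, -(∑ k, ε k * Complex.normSq (F k j) + 4 * ∑ k, ε k * Complex.normSq (K k a j)) ≤
      ∑ k, ε k * Complex.normSq (K k a a + K k b b - 2 * K k j j) := by
    intro j
    have t1 := hθ 1 (by simp) j
    have t2 := hθ (-1) (by simp) j
    have t3 := hθ Complex.I (by simp) j
    have t4 := hθ (-Complex.I) (by simp) j
    have t := add_nonneg (add_nonneg t1 t2) (add_nonneg t4 t3)
    simp only [← Finset.sum_add_distrib] at t
    have t' : 0 ≤ ∑ k, 4 * (ε k * Complex.normSq (K k a a + K k b b - 2 * K k j j)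
        + ε k * Complex.normSq (F k j) + 4 * (ε k * Complex.normSq (K k a j))) := by
      refine t.trans_eq (Finset.sum_congr rfl fun k _ => ?_)
      have e := phases (K k a a + K k b b - 2 * K k j j) (F k j) (-2 * K k a j)
      have e4 : Complex.normSq (-2 * K k a j) = 4 * Complex.normSq (K k a j) := by
        rw [map_mul]; congr 1; simp [Complex.normSq_apply]; norm_num
      rw [e4] at e
      simp only [star_one, star_neg, Complex.star_def, Complex.conj_I] 
      have : ∀ p q r : ℂ, p + -1 * q + -1 * r = p - q - r := fun p q r => by ring
      rw [this]
      have : ∀ p q r : ℂ, p + -Complex.I * q + Complex.I * r = p - Complex.I * q + Complex.I * r := fun p q r => by ring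
      rw [this]
      have : ∀ p q r : ℂ, p + - -Complex.I * q + -Complex.I * r = p + Complex.I * q - Complex.I * r := fun p q r => by ring
      rw [this]
      simp only [one_mul]
      linear_combination (ε k) * e
    rw [← Finset.mul_sum, Finset.sum_add_distrib, Finset.sum_add_distrib, ← Finset.mul_sum] at t'
    linarith
  have hD : 0 ≤ ∑ i ∈ J, ∑ j ∈ J, ∑ k, ε k * Complex.normSq (K k i i - K k j j) :=
    Finset.sum_nonneg fun i _ => Finset.sum_nonneg fun j _ => h.diag_sub i j
  have htr : ∑ k, ε k * Complex.normSq (K k).trace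
      = d / 2 * ∑ k, ε k * Complex.normSq (F k a) + d * ∑ j ∈ J, ∑ k, ε k * Complex.normSq (K k j j)
        - (∑ j ∈ J, ∑ k, ε k * Complex.normSq (K k a a + K k b b - 2 * K k j j)) / 2
        - (∑ i ∈ J, ∑ j ∈ J, ∑ k, ε k * Complex.normSq (K k i i - K k j j)) / 2 := by
    have c1 : ∑ i ∈ J, ∑ j ∈ J, ∑ k, ε k * Complex.normSq (K k i i - K k j j)
        = ∑ k, ε k * ∑ i ∈ J, ∑ j ∈ J, Complex.normSq (K k i i - K k j j) := by
      simp only [Finset.mul_sum]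
      rw [Finset.sum_comm_cycle]
    have c2 : ∀ g : ι → Fin d → ℝ, ∑ j ∈ J, ∑ k, ε k * g k j = ∑ k, ε k * ∑ j ∈ J, g k j := by
      intro g
      simp only [Finset.mul_sum]
      rw [Finset.sum_comm]
    rw [c1, c2, c2, Finset.mul_sum, Finset.mul_sum, Finset.sum_div, Finset.sum_div,
      ← Finset.sum_add_distrib, ← Finset.sum_sub_distrib, ← Finset.sum_sub_distrib]
    refine Finset.sum_congr rfl fun k _ => ?_
    have e := lagrange J (K k a a + K k b b) (fun j => K k j j)
    rw [hcard] at e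
    rw [hFa, Matrix.trace, hsum, ← add_assoc]
    simp only [Matrix.diag]
    linear_combination (ε k) * e
  have hcolJ : ∀ j ∈ J, ∑ k, ε k * Complex.normSq (K k j j) + ∑ k, ε k * Complex.normSq (K k a j) ≤ 1 := by
    intro j hj
    rw [← hcol j]
    simp only [Finset.mul_sum]
    rw [Finset.sum_comm]
    exact Finset.add_le_sum (f := fun i => ∑ k, ε k * Complex.normSq (K k i j))
      (fun i _ => h.entry i j) (Finset.mem_univ j) (Finset.mem_univ a) (hJa j hj)
  have hXle : ∑ k, ε k * ∑ i, Complex.normSq ((X *ᵥ (K k).col b) i) ≤ 1 := by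
    obtain ⟨Y, hY⟩ := exists_conjTranspose_mul_self hX
    rw [← hcol b, ← sub_nonneg, ← Finset.sum_sub_distrib]
    have e : ∀ w : Fin d → ℂ, ∑ i, Complex.normSq (w i) - ∑ i, Complex.normSq ((X *ᵥ w) i)
        = ∑ i, Complex.normSq ((Y *ᵥ w) i) := by
      intro w
      have q : ∀ v : Fin d → ℂ, ((∑ i, Complex.normSq (v i) : ℝ) : ℂ) = star v ⬝ᵥ v := by
        intro v
        simp [dotProduct, Complex.normSq_eq_conj_mul_self]
      apply Complex.ofReal_injective
      push_cast [Complex.ofReal_sub]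
      have := congrArg (fun M => star w ⬝ᵥ M *ᵥ w) hY
      simp only [Matrix.sub_mulVec, Matrix.one_mulVec, dotProduct_sub, ← Matrix.mulVec_mulVec] at this
      have r : ∀ (Z : Matrix (Fin d) (Fin d) ℂ), star w ⬝ᵥ Zᴴ *ᵥ Z *ᵥ w = star (Z *ᵥ w) ⬝ᵥ Z *ᵥ w := by
        intro Z
        rw [Matrix.star_mulVec, ← Matrix.dotProduct_mulVec]
      rw [r, r, ← q, ← q, ← q] at this
      exact_mod_cast this
    have e' : ∀ k, ε k * ∑ i, Complex.normSq (K k i b) - ε k * ∑ i, Complex.normSq ((X *ᵥ (K k).col b) i)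
        = ∑ i, ε k * Complex.normSq ((Y *ᵥ (K k).col b) i) := by
      intro k
      rw [← Finset.mul_sum, ← e, mul_sub]
      rfl
    simp only [e']
    rw [Finset.sum_comm]
    refine Finset.sum_nonneg fun i _ => ?_
    have := h.one (star (Y i)) (Pi.single b 1)
    simpa [Matrix.mulVec] using this
  have hFsum : ∑ i, ∑ k, ε k * Complex.normSq (F k i)
      ≤ 2 + 2 * ∑ k, ε k * (star ((K k).col a) ⬝ᵥ X *ᵥ (K k).col b).re := by
    have : ∀ k, ∑ i, ε k * Complex.normSq (F k i) = ε k * ∑ i, Complex.normSq (K k i a)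
        + ε k * ∑ i, Complex.normSq ((X *ᵥ (K k).col b) i)
        + 2 * (ε k * (star ((K k).col a) ⬝ᵥ X *ᵥ (K k).col b).re) := by
      intro k
      simp only [hF, dotProduct, Complex.re_sum, Finset.mul_sum, ← Finset.sum_add_distrib]
      refine Finset.sum_congr rfl fun i _ => ?_
      rw [Complex.normSq_add]
      simp [Complex.normSq_apply]
      ring
    rw [Finset.sum_comm]
    simp only [this, Finset.sum_add_distrib, ← Finset.mul_sum, hcol a]
    linarith
  have hFsplit := hsum (fun i => ∑ k, ε k * Complex.normSq (F k i))
  have hs1 := Finset.sum_le_sum (s := J) fun j _ => hstep j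
  have hs2 := Finset.sum_le_sum hcolJ
  have hs3 : 0 ≤ ∑ j ∈ J, ∑ k, ε k * Complex.normSq (F k j) := Finset.sum_nonneg fun j _ => hFpos j
  have hs4 : 0 ≤ ∑ j ∈ J, ∑ k, ε k * Complex.normSq (K k a j) := Finset.sum_nonneg fun j _ => h.entry a j
  have hs5 := hFpos b
  simp only [Finset.sum_neg_distrib, Finset.sum_add_distrib, ← Finset.mul_sum, Finset.sum_const,
    nsmul_eq_mul, mul_one] at hs1 hs2
  simp only at hFsplit
  set A := ∑ k, ε k * Complex.normSq (F k a)
  set B := ∑ k, ε k * Complex.normSq (F k b)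
  set C := ∑ j ∈ J, ∑ k, ε k * Complex.normSq (F k j)
  set P := ∑ j ∈ J, ∑ k, ε k * Complex.normSq (K k j j)
  set R := ∑ j ∈ J, ∑ k, ε k * Complex.normSq (K k a j)
  set S := ∑ k, ε k * (star ((K k).col a) ⬝ᵥ X *ᵥ (K k).col b).re
  have hJc : (J.card : ℝ) = d - 2 := by linarith
  rw [hJc] at hs2
  have g1 : ∑ k, ε k * Complex.normSq (K k).trace ≤ d / 2 * A + d * P + (C + 4 * R) / 2 := by
    linarith
  have g2 : (d : ℝ) / 2 * (A + (B + C)) ≤ d / 2 * (2 + 2 * S) := by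
    rw [← hFsplit]; gcongr
  have g3 : (d : ℝ) * (P + R) ≤ d * (d - 2) := by gcongr
  have g4 : 0 ≤ ((d : ℝ) - 1) * C := mul_nonneg (by linarith) hs3
  have g5 : 0 ≤ ((d : ℝ) - 2) * R := mul_nonneg (by linarith) hs4
  have g6 : 0 ≤ (d : ℝ) * B := mul_nonneg (by linarith) hs5
  linarith

/-! ### Passage to spectral values -/

theorem IsKraus.trace_mul_apply {Φ : Module.End ℂ (Matrix (Fin d) (Fin d) ℂ)} {ε : ι → ℝ}
    {K : ι → Matrix (Fin d) (Fin d) ℂ} (hK : IsKraus Φ ε K) (X : Matrix (Fin d) (Fin d) ℂ)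
    (u v : Fin d → ℂ) :
    (X * Φ (vecMulVec v (star u))).trace
      = ∑ k, (ε k : ℂ) * (star (K k *ᵥ u) ⬝ᵥ X *ᵥ (K k *ᵥ v)) := by
  rw [hK, Finset.mul_sum, trace_sum]
  refine Finset.sum_congr rfl fun k _ => ?_
  rw [Matrix.mul_smul, trace_smul, mul_vecMulVec, vecMulVec_mul, ← star_mulVec, mul_vecMulVec,
    trace_vecMulVec, dotProduct_comm, smul_eq_mul]

/-- Any orthonormal pair occurs as two distinct columns of a unitary matrix. -/
theorem exists_unitary (u v : Fin d → ℂ) (hu : star u ⬝ᵥ u = 1) (hv : star v ⬝ᵥ v = 1)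
    (huv : star u ⬝ᵥ v = 0) :
    ∃ (U : Matrix (Fin d) (Fin d) ℂ) (a b : Fin d), a ≠ b ∧ Uᴴ * U = 1 ∧ U.col a = u ∧ U.col b = v := by
  have hin : ∀ x y : Fin d → ℂ, inner ℂ (WithLp.toLp 2 x : EuclideanSpace ℂ (Fin d)) (WithLp.toLp 2 y)
      = star x ⬝ᵥ y := by
    intro x y
    rw [EuclideanSpace.inner_toLp_toLp, dotProduct_comm]
  set u' : EuclideanSpace ℂ (Fin d) := WithLp.toLp 2 u with hu'
  set v' : EuclideanSpace ℂ (Fin d) := WithLp.toLp 2 v with hv'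
  have hvu : star v ⬝ᵥ u = 0 := by rw [star_dotProduct, huv, star_zero]
  have hne : u' ≠ v' := by
    intro h
    have h' : u = v := WithLp.toLp_injective 2 h
    rw [← h', hu] at huv
    exact one_ne_zero huv
  have ho : Orthonormal ℂ ((↑) : ({u', v'} : Set (EuclideanSpace ℂ (Fin d))) → EuclideanSpace ℂ (Fin d)) := by
    rw [orthonormal_subtype_iff_ite]
    intro x hx y hy
    rcases hx with rfl | rfl <;> rcases hy with rfl | rfl
    · rw [if_pos rfl, hin, hu]
    · rw [if_neg hne, hin, huv]
    · rw [if_neg hne.symm, hin, hvu]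
    · rw [if_pos rfl, hin, hv]
  obtain ⟨s, B, hs, hB⟩ := ho.exists_orthonormalBasis_extension
  have hc : Fintype.card s = Fintype.card (Fin d) := by
    rw [← Module.finrank_eq_card_basis B.toBasis, finrank_euclideanSpace]
  let e : s ≃ Fin d := Fintype.equivOfCardEq hc
  have hus : u' ∈ s := hs (by simp)
  have hvs : v' ∈ s := hs (by simp)
  refine ⟨of fun i j => (B.reindex e j).ofLp i, e ⟨u', hus⟩, e ⟨v', hvs⟩, ?_, ?_, ?_, ?_⟩
  · intro h
    exact hne (congrArg Subtype.val (e.injective h))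
  · ext i j
    have h := (orthonormal_iff_ite.mp (B.reindex e).orthonormal) i j
    rw [one_apply, ← h]
    exact (hin (B.reindex e i).ofLp (B.reindex e j).ofLp).symm
  · ext i
    simp [hB, Matrix.col, hu']
  · ext i
    simp [hB, Matrix.col, hv']

/-- The bound of `core` in invariant form, obtained by conjugating the Kraus matrices and `X` by a
unitary with columns `u` and `v`. -/
theorem trace_le_of_contraction {Φ : Module.End ℂ (Matrix (Fin d) (Fin d) ℂ)}
    (h2 : IsTwoPos ⇑Φ) (hTP : IsTracePreserving ⇑Φ) (X : Matrix (Fin d) (Fin d) ℂ)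
    (hX : (1 - Xᴴ * X).PosSemidef) (u v : Fin d → ℂ) (hu : star u ⬝ᵥ u = 1) (hv : star v ⬝ᵥ v = 1)
    (huv : star u ⬝ᵥ v = 0) (hXu : Xᴴ *ᵥ u = v) :
    (LinearMap.trace ℂ (Matrix (Fin d) (Fin d) ℂ) Φ).re ≤
      d * (X * Φ (vecMulVec v (star u))).trace.re + ((d : ℝ) ^ 2 - d) := by
  obtain ⟨ε, K, hK⟩ := exists_kraus h2
  obtain ⟨U, a, b, hab, hU, hUa, hUb⟩ := exists_unitary u v hu hv huv
  have hU' : U * Uᴴ = 1 := mul_eq_one_comm.mp hU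
  have hdot : ∀ (x : Fin d → ℂ) (M : Matrix (Fin d) (Fin d) ℂ) (y : Fin d → ℂ),
      star x ⬝ᵥ (Uᴴ * M * U) *ᵥ y = star (U *ᵥ x) ⬝ᵥ M *ᵥ (U *ᵥ y) := by
    intro x M y
    rw [star_mulVec, ← dotProduct_mulVec, mulVec_mulVec, mulVec_mulVec, Matrix.mul_assoc]
  have hBP : BlockPos ε (fun k => Uᴴ * K k * U) := by
    intro x₁ y₁ x₂ y₂
    simp only [hdot]
    exact hK.blockPos h2 _ _ _ _
  have hconj : ∀ M N : Matrix (Fin d) (Fin d) ℂ, (Uᴴ * M * U)ᴴ * (Uᴴ * N * U) = Uᴴ * (Mᴴ * N) * U := by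
    intro M N
    calc _ = Uᴴ * Mᴴ * (U * Uᴴ) * N * U := by
          simp only [conjTranspose_mul, conjTranspose_conjTranspose, Matrix.mul_assoc]
      _ = _ := by rw [hU', Matrix.mul_one, Matrix.mul_assoc Uᴴ]
  have hsum : ∑ k, (ε k : ℂ) • ((Uᴴ * K k * U)ᴴ * (Uᴴ * K k * U)) = 1 := by
    have h := congrArg (fun M => Uᴴ * M * U) (hK.sum_conjTranspose_mul hTP)
    simp only [Finset.mul_sum, Finset.sum_mul, Matrix.mul_one, hU, Matrix.mul_smul,
      Matrix.smul_mul] at h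
    simpa only [hconj] using h
  have hXc : (1 - (Uᴴ * X * U)ᴴ * (Uᴴ * X * U)).PosSemidef := by
    have h := hX.conjTranspose_mul_mul_same U
    rwa [Matrix.mul_sub, Matrix.sub_mul, Matrix.mul_one, hU, ← hconj] at h
  have hUa' : U *ᵥ Pi.single a 1 = u := by rw [mulVec_single_one, hUa]
  have hUb' : U *ᵥ Pi.single b 1 = v := by rw [mulVec_single_one, hUb]
  have hXa : (Uᴴ * X * U) a = Pi.single b 1 := by
    ext c
    have h := hdot (Pi.single a 1) X (Pi.single c 1)
    have h' : star u ⬝ᵥ X *ᵥ (U *ᵥ Pi.single c 1) = star v ⬝ᵥ U *ᵥ Pi.single c 1 := by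
      rw [← hXu, star_mulVec, conjTranspose_conjTranspose, dotProduct_mulVec]
    have h'' : star v ⬝ᵥ U *ᵥ Pi.single c 1 = (1 : Matrix (Fin d) (Fin d) ℂ) b c := by
      rw [← hUb', star_mulVec, ← dotProduct_mulVec, mulVec_mulVec, hU]
      simp
    rw [hUa', h', h''] at h
    simp only [← Pi.single_star, star_one, single_one_dotProduct, mulVec_single_one, col_apply] at h
    rw [h, one_apply, Pi.single_apply]
    simp [eq_comm]
  have h := core ε _ hBP (sum_normSq_col hsum) a b hab _ hXc hXa
  have htr : ∀ k, (Uᴴ * K k * U).trace = (K k).trace := by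
    intro k
    rw [trace_mul_cycle, hU', Matrix.one_mul]
  have hval : (X * Φ (vecMulVec v (star u))).trace.re
      = ∑ k, ε k * (star ((Uᴴ * K k * U).col a) ⬝ᵥ (Uᴴ * X * U) *ᵥ (Uᴴ * K k * U).col b).re := by
    rw [hK.trace_mul_apply, Complex.re_sum]
    refine Finset.sum_congr rfl fun k _ => ?_
    have hc : ∀ c, U *ᵥ (Uᴴ * K k * U).col c = K k *ᵥ (U *ᵥ Pi.single c 1) := by
      intro c
      rw [← mulVec_single_one, mulVec_mulVec, mulVec_mulVec, ← Matrix.mul_assoc, ← Matrix.mul_assoc,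
        hU', Matrix.one_mul]
    rw [Complex.re_ofReal_mul, hdot, hc, hc, hUa', hUb']
  simp only [htr] at h
  rwa [hK.trace, hval]

/-- A functional vanishing on the proper subspace `range (μ - Φ)` is an eigenvector of the transpose
of `Φ`; `X` represents it through the trace pairing. -/
theorem exists_dual_eigenvector {Φ : Module.End ℂ (Matrix (Fin d) (Fin d) ℂ)} {μ : ℂ}
    (hμ : μ ∈ spectrum ℂ Φ) : ∃ X : Matrix (Fin d) (Fin d) ℂ, X ≠ 0 ∧
      ∀ ρ, (X * Φ ρ).trace = μ * (X * ρ).trace := by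
  have hr : (algebraMap ℂ (Module.End ℂ (Matrix (Fin d) (Fin d) ℂ)) μ - Φ).range ≠ ⊤ := by
    intro h
    apply hμ
    exact (LinearMap.isUnit_iff_range_eq_top _).mpr h
  obtain ⟨f, hf, hle⟩ := Submodule.exists_le_ker_of_lt_top _ (lt_top_iff_ne_top.mpr hr)
  have hrep : ∀ ρ, ((of fun i j => f (single j i 1) : Matrix (Fin d) (Fin d) ℂ) * ρ).trace = f ρ := by
    intro ρ
    conv_rhs => rw [matrix_eq_sum_single ρ]
    simp only [map_sum, Matrix.trace, diag_apply, mul_apply, of_apply]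
    rw [Finset.sum_comm]
    refine Finset.sum_congr rfl fun i _ => Finset.sum_congr rfl fun j _ => ?_
    have : single i j (ρ i j) = ρ i j • single i j (1 : ℂ) := by simp
    rw [this, map_smul, smul_eq_mul, mul_comm]
  refine ⟨of fun i j => f (single j i 1), ?_, fun ρ => ?_⟩
  · intro h0
    apply hf
    ext ρ
    rw [← hrep, h0]
    simp
  · rw [hrep, hrep]
    have h := hle (LinearMap.mem_range_self _ ρ)
    simp only [LinearMap.mem_ker, LinearMap.sub_apply, Module.algebraMap_end_apply, map_sub,
      map_smul, smul_eq_mul, sub_eq_zero] at h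
    exact h.symm

theorem trace_le_sq {Φ : Module.End ℂ (Matrix (Fin d) (Fin d) ℂ)}
    (h2 : IsTwoPos ⇑Φ) (hTP : IsTracePreserving ⇑Φ) :
    (LinearMap.trace ℂ (Matrix (Fin d) (Fin d) ℂ) Φ).re ≤ (d : ℝ) ^ 2 := by
  obtain ⟨ε, K, hK⟩ := exists_kraus h2
  rw [hK.trace]
  exact trace_bound_sq ε K (hK.blockPos h2) (sum_normSq_col (hK.sum_conjTranspose_mul hTP))

/-- Matrix form of `exists_max_variance`: up to a scalar shift and scaling, `Y` is a contraction `X`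
mapping some unit vector `v` to a unit vector `u` orthogonal to it. For `m = 0` the matrix `Y` is
scalar, and nothing is claimed about `X`, `u`, `v`. -/
theorem exists_normalized_contraction [NeZero d] (Y : Matrix (Fin d) (Fin d) ℂ) :
    ∃ (α m : ℂ) (X : Matrix (Fin d) (Fin d) ℂ) (u v : Fin d → ℂ), Y = α • 1 + m • X ∧
      (m ≠ 0 → (1 - Xᴴ * X).PosSemidef ∧ star u ⬝ᵥ u = 1 ∧ star v ⬝ᵥ v = 1 ∧ star u ⬝ᵥ v = 0 ∧
        X *ᵥ v = u ∧ Xᴴ *ᵥ u = v) := by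
  have hin : ∀ x y : EuclideanSpace ℂ (Fin d), inner ℂ x y = star x.ofLp ⬝ᵥ y.ofLp := by
    intro x y
    rw [EuclideanSpace.inner_eq_star_dotProduct, dotProduct_comm]
  have hsq : ∀ x : EuclideanSpace ℂ (Fin d), star x.ofLp ⬝ᵥ x.ofLp = ((‖x‖ ^ 2 : ℝ) : ℂ) := by
    intro x
    rw [← hin, inner_self_eq_norm_sq_to_K]
    norm_cast
  obtain ⟨α, v, hv1, hv0, hmax⟩ := exists_max_variance (toEuclideanLin Y)
  set r : ℝ := ‖toEuclideanLin Y v - α • v‖ with hr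
  set X : Matrix (Fin d) (Fin d) ℂ := ((r : ℂ)⁻¹) • (Y - α • 1) with hX
  have hXz : ∀ z : EuclideanSpace ℂ (Fin d),
      WithLp.toLp 2 (X *ᵥ z.ofLp) = (r : ℂ)⁻¹ • (toEuclideanLin Y z - α • z) := by
    intro z
    ext i
    simp [hX, Matrix.smul_mulVec, Matrix.sub_mulVec, toLpLin_apply]
  refine ⟨α, r, X, X *ᵥ v.ofLp, v.ofLp, ?_, fun hr0 => ?_⟩
  · by_cases hr0 : (r : ℂ) = 0
    · rw [hr0, zero_smul, add_zero]
      have hr0' : r = 0 := by exact_mod_cast hr0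
      apply Matrix.toEuclideanLin.injective
      ext z i
      have h := hmax z
      rw [hr0', zero_mul, norm_le_zero_iff, sub_eq_zero] at h
      rw [h]
      simp
    · rw [hX, smul_smul, mul_inv_cancel₀ hr0, one_smul, add_sub_cancel]
  · have hr1 : r ≠ 0 := by exact_mod_cast hr0
    have hrpos : 0 < r := lt_of_le_of_ne (norm_nonneg _) hr1.symm
    have hquad : ∀ z : EuclideanSpace ℂ (Fin d), star z.ofLp ⬝ᵥ (1 - Xᴴ * X) *ᵥ z.ofLp
        = ((‖z‖ ^ 2 - ‖WithLp.toLp 2 (X *ᵥ z.ofLp)‖ ^ 2 : ℝ) : ℂ) := by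
      intro z
      rw [Matrix.sub_mulVec, dotProduct_sub, one_mulVec, hsq, ← mulVec_mulVec, dotProduct_mulVec,
        ← star_mulVec, Complex.ofReal_sub]
      congr 1
      exact hsq (WithLp.toLp 2 (X *ᵥ z.ofLp))
    have hnv : ‖WithLp.toLp 2 (X *ᵥ v.ofLp)‖ = 1 := by
      rw [hXz, norm_smul, ← hr, norm_inv, Complex.norm_real, Real.norm_of_nonneg hrpos.le,
        inv_mul_cancel₀ hr1]
    have hpos : (1 - Xᴴ * X).PosSemidef := by
      refine PosSemidef.of_dotProduct_mulVec_nonneg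
        (isHermitian_one.sub (isHermitian_conjTranspose_mul_self X)) fun z => ?_
      rw [hquad (WithLp.toLp 2 z), Complex.zero_le_real, sub_nonneg]
      gcongr
      rw [hXz, norm_smul, norm_inv, Complex.norm_real, Real.norm_of_nonneg hrpos.le,
        inv_mul_le_iff₀ hrpos]
      exact hmax _
    refine ⟨hpos, ?_, ?_, ?_, rfl, ?_⟩
    · have := hsq (WithLp.toLp 2 (X *ᵥ v.ofLp))
      rw [hnv] at this
      simpa using this
    · rw [hsq, hv1]; simp
    · have : inner ℂ v (WithLp.toLp 2 (X *ᵥ v.ofLp)) = 0 := by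
        rw [hXz, inner_smul_right, hv0, mul_zero]
      rw [hin] at this
      rw [star_dotProduct, this, star_zero]
    · -- equality in the contraction bound at `v` forces `v` into the kernel of `1 - Xᴴ X`
      have h : (1 - Xᴴ * X) *ᵥ v.ofLp = 0 := by
        rw [← hpos.dotProduct_mulVec_zero_iff, hquad, hnv, hv1]
        simp
      rw [Matrix.sub_mulVec, one_mulVec, sub_eq_zero] at h
      rw [mulVec_mulVec, ← h]

theorem trace_le_of_mem_spectrum [NeZero d] {Φ : Module.End ℂ (Matrix (Fin d) (Fin d) ℂ)}
    (h2 : IsTwoPos ⇑Φ) (hTP : IsTracePreserving ⇑Φ) {μ : ℂ} (hμ : μ ∈ spectrum ℂ Φ) :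
    (LinearMap.trace ℂ (Matrix (Fin d) (Fin d) ℂ) Φ).re ≤ d * μ.re + ((d : ℝ) ^ 2 - d) := by
  obtain ⟨Y, hY0, hY⟩ := exists_dual_eigenvector hμ
  obtain ⟨α, m, X, u, v, rfl, hm⟩ := exists_normalized_contraction Y
  have hY' : ∀ ρ, α * ρ.trace + m * (X * Φ ρ).trace = μ * (α * ρ.trace + m * (X * ρ).trace) := by
    intro ρ
    have h := hY ρ
    simpa only [Matrix.add_mul, trace_add, Matrix.smul_mul, trace_smul, Matrix.one_mul, hTP ρ,
      smul_eq_mul] using h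
  by_cases hm0 : m = 0
  -- `Y` is a nonzero scalar, so the eigenfunctional is the trace and `μ = 1`
  · subst hm0
    have hα : α ≠ 0 := by rintro rfl; simp at hY0
    have h := hY' 1
    rw [trace_one, Fintype.card_fin] at h
    have hd : (d : ℂ) ≠ 0 := Nat.cast_ne_zero.mpr (NeZero.ne d)
    have h1 : μ = 1 := by
      have : (α * d) * (μ - 1) = 0 := by linear_combination -h
      rcases mul_eq_zero.mp this with h | h
      · exact absurd h (mul_ne_zero hα hd)
      · exact sub_eq_zero.mp h
    have := trace_le_sq h2 hTP
    rw [h1, Complex.one_re]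
    linarith
  · obtain ⟨hX, hu, hv, huv, hXv, hXu⟩ := hm hm0
    -- the traceless matrix `v u†` is blind to the scalar part of the eigenfunctional
    have h := hY' (vecMulVec v (star u))
    have e1 : (vecMulVec v (star u)).trace = 0 := by rw [trace_vecMulVec, dotProduct_comm, huv]
    have e2 : (X * vecMulVec v (star u)).trace = 1 := by
      rw [mul_vecMulVec, hXv, trace_vecMulVec, dotProduct_comm, hu]
    rw [e1, e2] at h
    have h' : (X * Φ (vecMulVec v (star u))).trace = μ :=
      mul_left_cancel₀ hm0 (by linear_combination h)
    rw [← h']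
    exact trace_le_of_contraction h2 hTP X hX u v hu hv huv hXu

end

/-- Any 2-positive trace-preserving map with a positive definite fixed point satisfies
tr(Φ) ≤ d·min Re σ(Φ) + (d² − d). -/
theorem trace_le_of_full_rank_fixed_point (d : ℕ) (hd : 1 ≤ d)
    (Φ : Module.End ℂ (Matrix (Fin d) (Fin d) ℂ))
    (h2 : IsTwoPos ⇑Φ) (hTP : IsTracePreserving ⇑Φ)
    (hfix : ∃ ω : Matrix (Fin d) (Fin d) ℂ, ω.PosDef ∧ Φ ω = ω) :
    (LinearMap.trace ℂ (Matrix (Fin d) (Fin d) ℂ) Φ).re ≤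
      d * sInf (Complex.re '' spectrum ℂ Φ) + ((d : ℝ) ^ 2 - d) := by
  have : NeZero d := ⟨by omega⟩
  have hd0 : (0 : ℝ) < d := by exact_mod_cast hd
  have hne : (Complex.re '' spectrum ℂ Φ).Nonempty :=
    (spectrum.nonempty_of_isAlgClosed_of_finiteDimensional ℂ Φ).image _
  have h : ((LinearMap.trace ℂ (Matrix (Fin d) (Fin d) ℂ) Φ).re - ((d : ℝ) ^ 2 - d)) / d
      ≤ sInf (Complex.re '' spectrum ℂ Φ) := by
    refine le_csInf hne ?_
    rintro _ ⟨μ, hμ, rfl⟩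
    rw [div_le_iff₀ hd0]
    linarith [trace_le_of_mem_spectrum h2 hTP hμ]
  rw [div_le_iff₀ hd0] at h
  linarith
end
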